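/- Let K ⊂ ℝ^{2n} be a convex body with 0 in its interior and smooth boundary, and let T ⊂ ℝ^{2n} be a convex body with 0 in its interior. Then for every capacity carrier γ of K, with period T₀, the derivative d_T(K) := lim_{ε→0⁺} (c(K+εT) − c(K))/ε satisfies d_T(K) ≤ length_{JT°}(γ) = ∫₀^{T₀} ‖γ̇(t)‖_{JT°} dt, where ‖x‖_{JT°} = inf{r > 0 : x ∈ r·JT°} and JT° = {Jy : y ∈ T°}. -/

import Mathlib

open MeasureTheory Real Set Filter intervalIntegral Metric
open scoped InnerProductSpace Topology Pointwise

noncomputable section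

/-- The phase space `ℝ^{2n}`. -/
abbrev E (n : ℕ) := EuclideanSpace ℝ (Fin (2 * n))

/-- The standard complex structure `J` on `ℝ^{2n}`, given in coordinates
`(x₁,y₁,…,xₙ,yₙ)` by `J(x₁,y₁,…,xₙ,yₙ) = (−y₁,x₁,…,−yₙ,xₙ)`. -/
def Jmap (n : ℕ) (v : E n) : E n := WithLp.toLp 2 fun i =>
  if _h : i.val % 2 = 0 then -v ⟨i.val + 1, by have := i.isLt; omega⟩
  else v ⟨i.val - 1, by have := i.isLt; omega⟩

/-- The support function `h_K(u) = sup_{x ∈ K} ⟨x, u⟩`. -/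
def suppFn (n : ℕ) (K : Set (E n)) (u : E n) : ℝ :=
  sSup ((fun x => ⟪x, u⟫_ℝ) '' K)

/-- A convex body: a compact convex set with nonempty interior. -/
def IsConvexBody (n : ℕ) (K : Set (E n)) : Prop :=
  IsCompact K ∧ Convex ℝ K ∧ (interior K).Nonempty

/-- Membership in the loop space `𝓔_p`: the pair `(z, dz)` represents an absolutely
continuous `2π`-periodic loop `z` with derivative `dz ∈ L^p([0,2π])`, mean zero and
normalized action `(1/2)∫₀^{2π} ⟨J z, ż⟩ = 1`. -/
def InE (n : ℕ) (p : ℝ) (z dz : ℝ → E n) : Prop :=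
  Function.Periodic z (2 * π) ∧
  (∀ a b : ℝ, IntervalIntegrable dz volume a b) ∧
  (∀ t, z t = z 0 + ∫ s in (0:ℝ)..t, dz s) ∧
  MemLp dz (ENNReal.ofReal p) (volume.restrict (Set.Ioc (0:ℝ) (2 * π))) ∧
  (∫ t in (0:ℝ)..(2 * π), z t) = 0 ∧
  (1 / 2) * ∫ t in (0:ℝ)..(2 * π), ⟪Jmap n (z t), dz t⟫_ℝ = 1

/-- The (Ekeland–Hofer–Zehnder) capacity of a convex body,
`c(S) = (π · inf_{z ∈ 𝓔₂} (1/2π) ∫₀^{2π} h_S(ż(t)) dt)²`. -/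
def capacity (n : ℕ) (S : Set (E n)) : ℝ :=
  (π * sInf { r : ℝ | ∃ z dz : ℝ → E n, InE n 2 z dz ∧
      r = (1 / (2 * π)) * ∫ t in (0:ℝ)..(2 * π), suppFn n S (dz t) }) ^ 2

/-- The action `𝒜(γ) = (1/2) ∫₀^{T₀} ⟨−Jγ̇(t), γ(t)⟩ dt` of a `T₀`-periodic curve. -/
def action (n : ℕ) (γ : ℝ → E n) (T₀ : ℝ) : ℝ :=
  (1 / 2) * ∫ t in (0:ℝ)..T₀, ⟪-Jmap n (deriv γ t), γ t⟫_ℝ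

/-- A closed characteristic on `∂K`: a nonconstant `T₀`-periodic `C¹` curve lying on
`∂K` satisfying `γ̇ = d·J∇F(γ)` for some `d > 0`, where `F = ‖·‖_K²`. -/
def IsClosedCharacteristic (n : ℕ) (K : Set (E n)) (γ : ℝ → E n) (T₀ : ℝ) : Prop :=
  0 < T₀ ∧ Function.Periodic γ T₀ ∧ ContDiff ℝ 1 γ ∧ (∃ s t, γ s ≠ γ t) ∧
  (∀ t, γ t ∈ frontier K) ∧
  ∃ d : ℝ, 0 < d ∧ ∀ t, deriv γ t = d • Jmap n (gradient (fun x => gauge K x ^ 2) (γ t))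

/-- A capacity carrier of `K`: a closed characteristic on `∂K` of minimal action. -/
def IsCapacityCarrier (n : ℕ) (K : Set (E n)) (γ : ℝ → E n) (T₀ : ℝ) : Prop :=
  IsClosedCharacteristic n K γ T₀ ∧
  ∀ γ' T₀', IsClosedCharacteristic n K γ' T₀' → action n γ T₀ ≤ action n γ' T₀'

/-- The minimal action of a closed characteristic on `∂K`. -/
def minAction (n : ℕ) (K : Set (E n)) : ℝ :=
  sInf { a : ℝ | ∃ γ T₀, IsClosedCharacteristic n K γ T₀ ∧ a = action n γ T₀ }

/-- `K` has smooth boundary: its gauge function is `C¹` away from the origin. -/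
def HasSmoothBoundary (n : ℕ) (K : Set (E n)) : Prop :=
  ContDiffOn ℝ 1 (gauge K) {(0 : E n)}ᶜ

/-- The `p`-sum `K +ₚ T` of Firey: the convex body with support function
`(h_K^p + h_T^p)^{1/p}`. -/
def pSum (n : ℕ) (p : ℝ) (K T : Set (E n)) : Set (E n) :=
  { x | ∀ u, ⟪x, u⟫_ℝ ≤ (suppFn n K u ^ p + suppFn n T u ^ p) ^ (1 / p) }

/-- The polar body `T° = {x : ⟨x,y⟩ ≤ 1 for all y ∈ T}`. -/
def polarBody (n : ℕ) (T : Set (E n)) : Set (E n) :=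
  { x | ∀ y ∈ T, ⟪x, y⟫_ℝ ≤ 1 }

/-- The length `∫₀^{T₀} ‖γ̇(t)‖_B dt` of a curve measured with the gauge of `B`. -/
def lengthIn (n : ℕ) (B : Set (E n)) (γ : ℝ → E n) (T₀ : ℝ) : ℝ :=
  ∫ t in (0:ℝ)..T₀, gauge B (deriv γ t)

/-- Critical point of the functional `I_p(z) = ∫₀^{2π} h_K^p(ż(t)) dt` on `𝓔_p`. -/
def IsCriticalPoint (n : ℕ) (p : ℝ) (K : Set (E n)) (z dz : ℝ → E n) : Prop :=
  ∀ ξ dξ : ℝ → E n,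
    Function.Periodic ξ (2 * π) →
    (∀ a b : ℝ, IntervalIntegrable dξ volume a b) →
    (∀ t, ξ t = ξ 0 + ∫ s in (0:ℝ)..t, dξ s) →
    MemLp dξ (ENNReal.ofReal p) (volume.restrict (Set.Ioc (0:ℝ) (2 * π))) →
    (∫ t in (0:ℝ)..(2 * π), ξ t) = 0 →
    (∫ t in (0:ℝ)..(2 * π), ⟪ξ t, Jmap n (dz t)⟫_ℝ) = 0 →
    (∫ t in (0:ℝ)..(2 * π), ⟪gradient (fun u => suppFn n K u ^ p) (dz t), dξ t⟫_ℝ) = 0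

/-- The rotation-invariant probability measure on the unit sphere of `ℝ^{2n}`. -/
def sphereMeasure (n : ℕ) : Measure (sphere (0 : E n) 1) :=
  ((volume : Measure (E n)).toSphere Set.univ)⁻¹ • (volume : Measure (E n)).toSphere

/-- The mean width parameter `M*(K) = ∫_{S^{2n-1}} h_K dσ`. -/
def meanWidth (n : ℕ) (K : Set (E n)) : ℝ :=
  ∫ x : sphere (0 : E n) 1, suppFn n K (x : E n) ∂(sphereMeasure n)

/-!
Clarke's dual action principle, discretised. Among closed `N`-gons the ratio of the enclosed area to
the quadratic energy `∑ h_K²` of the edges attains its maximum; Hahn–Banach provides Lagrange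
multipliers at a maximiser, and equality in the Fenchel–Young inequality shows that the multipliers
form an orbit of the trapezoidal rule for the Hamiltonian `‖·‖_K²`. An ultralimit as `N → ∞` is a
closed characteristic on `∂K` of action at most `ℓ_K(z)² / 4` for every normalized loop `z`, where
`ℓ_S(z) = ∫ h_S(ż)`. Hence the loop obtained by rotating and rescaling a capacity carrier minimises
`ℓ_K`. Since `c(K + εT) = (inf (ℓ_K + ε ℓ_T) / 2)²` and an infimum of affine functions is concave,
the right derivative at `ε = 0` exists and is bounded by the slope at any minimiser of `ℓ_K`.
-/

/-! ## The complex structure -/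

section ComplexStructure

variable {n : ℕ}

/-- The involution of the coordinates of `ℝ^{2n}` that exchanges `xⱼ` and `yⱼ`. -/
def conjIndex (i : Fin (2 * n)) : Fin (2 * n) :=
  if _h : i.val % 2 = 0 then ⟨i.val + 1, by omega⟩ else ⟨i.val - 1, by omega⟩

lemma conjIndex_involutive : Function.Involutive (conjIndex (n := n)) := by
  intro i
  ext
  unfold conjIndex
  split_ifs <;> grind

lemma abs_Jmap_apply (v : E n) (i : Fin (2 * n)) : |Jmap n v i| = |v (conjIndex i)| := by
  unfold Jmap conjIndex
  split_ifs with h <;> simp [h]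

lemma norm_Jmap (v : E n) : ‖Jmap n v‖ = ‖v‖ := by
  simp only [EuclideanSpace.norm_eq, Real.norm_eq_abs, abs_Jmap_apply]
  exact congrArg Real.sqrt (Equiv.sum_comp conjIndex_involutive.toPerm fun i => |v i| ^ 2)

/-- The complex structure `Jmap n` as a linear isometry. -/
def jmapLinearIsometry (n : ℕ) : E n →ₗᵢ[ℝ] E n where
  toFun := Jmap n
  map_add' v w := by
    ext i
    simp only [Jmap, PiLp.add_apply]
    split_ifs <;> ring
  map_smul' c v := by
    ext i
    simp only [Jmap, PiLp.smul_apply, smul_eq_mul, RingHom.id_apply]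
    split_ifs <;> ring
  norm_map' := norm_Jmap

@[simp] lemma coe_jmapLinearIsometry : ⇑(jmapLinearIsometry n) = Jmap n := rfl

lemma Jmap_add (v w : E n) : Jmap n (v + w) = Jmap n v + Jmap n w :=
  map_add (jmapLinearIsometry n) v w

lemma Jmap_sub (v w : E n) : Jmap n (v - w) = Jmap n v - Jmap n w :=
  map_sub (jmapLinearIsometry n) v w

lemma Jmap_neg (v : E n) : Jmap n (-v) = -Jmap n v :=
  map_neg (jmapLinearIsometry n) v

lemma Jmap_smul (c : ℝ) (v : E n) : Jmap n (c • v) = c • Jmap n v :=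
  map_smul (jmapLinearIsometry n) c v

lemma continuous_Jmap : Continuous (Jmap n) := (jmapLinearIsometry n).continuous

lemma Jmap_Jmap (v : E n) : Jmap n (Jmap n v) = -v := by
  ext i
  simp only [Jmap, PiLp.neg_apply]
  split_ifs <;> grind

lemma inner_Jmap_Jmap (v w : E n) : ⟪Jmap n v, Jmap n w⟫_ℝ = ⟪v, w⟫_ℝ :=
  (jmapLinearIsometry n).inner_map_map v w

lemma inner_Jmap_left (v w : E n) : ⟪Jmap n v, w⟫_ℝ = -⟪v, Jmap n w⟫_ℝ := by
  rw [← inner_Jmap_Jmap v, Jmap_Jmap, inner_neg_right, neg_neg]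

lemma inner_Jmap_self (v : E n) : ⟪Jmap n v, v⟫_ℝ = 0 := by
  linarith [inner_Jmap_left v v, real_inner_comm v (Jmap n v)]

end ComplexStructure

/-! ## Support functions -/

section SupportFunction

variable {n : ℕ} {K T : Set (E n)}

lemma bddAbove_inner_image (hK : Bornology.IsBounded K) (u : E n) :
    BddAbove ((fun x => ⟪x, u⟫_ℝ) '' K) := by
  obtain ⟨R, hR⟩ := hK.exists_norm_le
  refine ⟨R * ‖u‖, ?_⟩
  rintro _ ⟨x, hx, rfl⟩
  exact (real_inner_le_norm x u).trans (by gcongr; exact hR x hx)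

lemma inner_le_suppFn (hK : Bornology.IsBounded K) {x : E n} (hx : x ∈ K) (u : E n) :
    ⟪x, u⟫_ℝ ≤ suppFn n K u :=
  le_csSup (bddAbove_inner_image hK u) ⟨x, hx, rfl⟩

lemma suppFn_le (hK : K.Nonempty) {u : E n} {b : ℝ} (h : ∀ x ∈ K, ⟪x, u⟫_ℝ ≤ b) :
    suppFn n K u ≤ b :=
  csSup_le (hK.image _) (by rintro _ ⟨x, hx, rfl⟩; exact h x hx)

lemma suppFn_nonneg (h0 : (0 : E n) ∈ K) (u : E n) : 0 ≤ suppFn n K u :=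
  Real.sSup_nonneg' ⟨0, ⟨0, h0, inner_zero_left u⟩, le_rfl⟩

lemma suppFn_smul {c : ℝ} (hc : 0 ≤ c) (u : E n) : suppFn n K (c • u) = c * suppFn n K u := by
  simp only [suppFn, inner_smul_right, ← smul_eq_mul]
  rw [← Real.sSup_smul_of_nonneg hc, ← Set.image_smul, Set.image_image]

lemma suppFn_zero : suppFn n K 0 = 0 := by
  simpa using suppFn_smul (K := K) le_rfl (0 : E n)

lemma suppFn_add_le (hK : Bornology.IsBounded K) (h0 : K.Nonempty) (u v : E n) :
    suppFn n K (u + v) ≤ suppFn n K u + suppFn n K v :=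
  suppFn_le h0 fun x hx => by
    rw [inner_add_right]
    exact add_le_add (inner_le_suppFn hK hx u) (inner_le_suppFn hK hx v)

lemma continuous_suppFn (hK : Bornology.IsBounded K) (h0 : K.Nonempty) :
    Continuous (suppFn n K) := by
  obtain ⟨R, hR⟩ := hK.exists_norm_le
  have hle (u : E n) : suppFn n K u ≤ R.toNNReal * ‖u‖ := suppFn_le h0 fun x hx =>
    (real_inner_le_norm x u).trans (by gcongr; exact (hR x hx).trans (le_max_left R 0))
  refine (LipschitzWith.of_le_add_mul R.toNNReal fun u v => ?_).continuous
  calc suppFn n K u = suppFn n K (v + (u - v)) := by rw [add_sub_cancel]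
    _ ≤ suppFn n K v + suppFn n K (u - v) := suppFn_add_le hK h0 _ _
    _ ≤ suppFn n K v + R.toNNReal * dist u v := by rw [dist_eq_norm]; gcongr; exact hle _

lemma exists_norm_le_mul_suppFn (hK : Bornology.IsBounded K) (h0 : K ∈ 𝓝 (0 : E n)) :
    ∃ C : ℝ, 0 < C ∧ ∀ u, ‖u‖ ≤ C * suppFn n K u := by
  obtain ⟨r, hr, hball⟩ := Metric.nhds_basis_closedBall.mem_iff.1 h0
  refine ⟨r⁻¹, inv_pos.2 hr, fun u => ?_⟩
  rw [le_inv_mul_iff₀ hr]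
  rcases eq_or_ne u 0 with rfl | hu
  · simp [suppFn_zero]
  · have hmem : (r * ‖u‖⁻¹) • u ∈ K := hball <| by
      rw [mem_closedBall_zero_iff, norm_smul, norm_mul, norm_inv, norm_norm, mul_assoc,
        inv_mul_cancel₀ (norm_ne_zero_iff.2 hu), mul_one, Real.norm_of_nonneg hr.le]
    calc r * ‖u‖ = ⟪(r * ‖u‖⁻¹) • u, u⟫_ℝ := by
          rw [real_inner_smul_left, real_inner_self_eq_norm_sq]
          field_simp
      _ ≤ suppFn n K u := inner_le_suppFn hK hmem u

lemma suppFn_pos (hK : Bornology.IsBounded K) (h0 : K ∈ 𝓝 (0 : E n)) {u : E n} (hu : u ≠ 0) :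
    0 < suppFn n K u := by
  obtain ⟨C, hC, h⟩ := exists_norm_le_mul_suppFn hK h0
  exact pos_of_mul_pos_right ((norm_pos_iff.2 hu).trans_le (h u)) hC.le

lemma suppFn_add_set (hK : Bornology.IsBounded K) (hK0 : K.Nonempty) (hT : Bornology.IsBounded T)
    (hT0 : T.Nonempty) (u : E n) : suppFn n (K + T) u = suppFn n K u + suppFn n T u := by
  have himage : (fun x => ⟪x, u⟫_ℝ) '' (K + T) =
      (fun x => ⟪x, u⟫_ℝ) '' K + (fun x => ⟪x, u⟫_ℝ) '' T :=
    Set.image_add ((innerSL ℝ).flip u)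
  rw [suppFn, himage, csSup_add (hK0.image _) (bddAbove_inner_image hK u) (hT0.image _)
    (bddAbove_inner_image hT u)]
  rfl

lemma suppFn_smul_set {c : ℝ} (hc : 0 ≤ c) (u : E n) :
    suppFn n (c • K) u = c * suppFn n K u := by
  rw [← suppFn_smul hc, suppFn, suppFn, ← Set.image_smul, Set.image_image]
  simp only [real_inner_smul_left, inner_smul_right]

lemma inner_le_gauge_mul_suppFn (hK : Bornology.IsBounded K) (h0 : K ∈ 𝓝 (0 : E n)) (x u : E n) :
    ⟪x, u⟫_ℝ ≤ gauge K x * suppFn n K u := by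
  have hlt (r : ℝ) (hr : gauge K x < r) : ⟪x, u⟫_ℝ ≤ r * suppFn n K u := by
    obtain ⟨b, hb, hbr, y, hy, rfl⟩ := exists_lt_of_gauge_lt (absorbent_nhds_zero (𝕜 := ℝ) h0) hr
    calc ⟪b • y, u⟫_ℝ = b * ⟪y, u⟫_ℝ := real_inner_smul_left y u b
      _ ≤ b * suppFn n K u := by gcongr; exact inner_le_suppFn hK hy u
      _ ≤ r * suppFn n K u := by gcongr; exact suppFn_nonneg (mem_of_mem_nhds h0) u
  have hlim : Tendsto (· * suppFn n K u) (𝓝[>] gauge K x) (𝓝 (gauge K x * suppFn n K u)) :=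
    ((continuous_mul_const _).tendsto _).mono_left nhdsWithin_le_nhds
  exact ge_of_tendsto hlim (eventually_mem_nhdsWithin.mono hlt)

end SupportFunction

/-! ## The gradient of the squared gauge -/

section GaugeSqGrad

lemma derivative_le_of_le_right {f g : ℝ → ℝ} {f' g' x : ℝ} (hf : HasDerivAt f f' x)
    (hg : HasDerivAt g g' x) (hx : f x = g x) (hle : ∀ s > 0, f (x + s) ≤ g (x + s)) :
    f' ≤ g' := by
  refine le_of_tendsto_of_tendsto hf.tendsto_slope_zero_right hg.tendsto_slope_zero_right ?_
  filter_upwards [self_mem_nhdsWithin] with s (hs : 0 < s)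
  simp only [hx, smul_eq_mul]
  gcongr
  exact hle s hs

variable {n : ℕ} {K : Set (E n)}

/-- The gradient `∇F` of the Hamiltonian `F = ‖·‖_K²`. -/
def gaugeSqGrad (n : ℕ) (K : Set (E n)) (x : E n) : E n := gradient (fun x => gauge K x ^ 2) x

lemma differentiable_gauge_sq (h0 : K ∈ 𝓝 (0 : E n)) (hs : HasSmoothBoundary n K) :
    Differentiable ℝ fun x => gauge K x ^ 2 := by
  intro x
  rcases eq_or_ne x 0 with rfl | hx
  · obtain ⟨r, hr, hball⟩ := Metric.mem_nhds_iff.1 h0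
    have hO : (fun x : E n => gauge K x ^ 2) =O[𝓝 0] fun x => ‖x - 0‖ ^ 2 := by
      refine .of_bound (r⁻¹ ^ 2) (.of_forall fun x => ?_)
      rw [sub_zero, norm_pow, norm_pow, norm_norm, Real.norm_of_nonneg (gauge_nonneg x), ← mul_pow]
      gcongr
      · exact gauge_nonneg x
      · exact (le_inv_mul_iff₀ hr).2 (mul_gauge_le_norm hball)
    exact (hO.hasFDerivAt one_lt_two).differentiableAt
  · exact ((hs.contDiffAt (isOpen_compl_singleton.mem_nhds hx)).differentiableAt one_ne_zero).pow 2

lemma hasFDerivAt_gauge_sq (h0 : K ∈ 𝓝 (0 : E n)) (hs : HasSmoothBoundary n K) (x : E n) :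
    HasFDerivAt (fun x => gauge K x ^ 2) (innerSL ℝ (gaugeSqGrad n K x)) x :=
  (differentiable_gauge_sq h0 hs x).hasGradientAt.hasFDerivAt

lemma hasDerivAt_gauge_sq_line (h0 : K ∈ 𝓝 (0 : E n)) (hs : HasSmoothBoundary n K) (p v : E n) :
    HasDerivAt (fun s : ℝ => gauge K (p + s • v) ^ 2) ⟪gaugeSqGrad n K p, v⟫_ℝ 0 := by
  have hline : HasDerivAt (fun s : ℝ => p + s • v) v 0 := by
    simpa using ((hasDerivAt_id (0 : ℝ)).smul_const v).const_add p
  exact (hasFDerivAt_gauge_sq h0 hs p).comp_hasDerivAt_of_eq (0 : ℝ) hline (by simp)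

lemma inner_gaugeSqGrad_self (h0 : K ∈ 𝓝 (0 : E n)) (hs : HasSmoothBoundary n K) (p : E n) :
    ⟪gaugeSqGrad n K p, p⟫_ℝ = 2 * gauge K p ^ 2 := by
  have hscale : HasDerivAt (fun s : ℝ => (1 + s) ^ 2 * gauge K p ^ 2) (2 * gauge K p ^ 2) 0 := by
    simpa using (((hasDerivAt_id (0 : ℝ)).const_add 1).fun_pow 2).mul_const (gauge K p ^ 2)
  refine (hasDerivAt_gauge_sq_line h0 hs p p).unique (hscale.congr_of_eventuallyEq ?_)
  filter_upwards [Ioi_mem_nhds (show (-1 : ℝ) < 0 by norm_num)] with s (hs : -1 < s)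
  rw [show p + s • p = (1 + s) • p by rw [add_smul, one_smul],
    gauge_smul_of_nonneg (by linarith), smul_eq_mul, mul_pow]

lemma suppFn_gaugeSqGrad (hK : Bornology.IsBounded K) (hc : Convex ℝ K) (h0 : K ∈ 𝓝 (0 : E n))
    (hs : HasSmoothBoundary n K) (p : E n) :
    suppFn n K (gaugeSqGrad n K p) = 2 * gauge K p := by
  refine le_antisymm (suppFn_le ⟨0, mem_of_mem_nhds h0⟩ fun x hx => ?_) ?_
  · have hsq : HasDerivAt (fun s : ℝ => (gauge K p + s) ^ 2) (2 * gauge K p) 0 := by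
      simpa using ((hasDerivAt_id (0 : ℝ)).const_add (gauge K p)).fun_pow 2
    rw [real_inner_comm]
    refine derivative_le_of_le_right (hasDerivAt_gauge_sq_line h0 hs p x) hsq (by simp) ?_
    intro s hs
    rw [zero_add]
    refine pow_le_pow_left₀ (gauge_nonneg _) ?_ 2
    calc gauge K (p + s • x) ≤ gauge K p + gauge K (s • x) :=
          gauge_add_le hc (absorbent_nhds_zero h0) _ _
      _ = gauge K p + s * gauge K x := by rw [gauge_smul_of_nonneg hs.le, smul_eq_mul]
      _ ≤ gauge K p + s := by
          gcongr
          exact mul_le_of_le_one_right hs.le (gauge_le_one_of_mem hx)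
  · have h := inner_le_gauge_mul_suppFn hK h0 p (gaugeSqGrad n K p)
    rw [real_inner_comm, inner_gaugeSqGrad_self h0 hs] at h
    rcases (gauge_nonneg p).eq_or_lt with hp | hp
    · rw [← hp, mul_zero]
      exact suppFn_nonneg (mem_of_mem_nhds h0) _
    · nlinarith

lemma inner_le_gauge_sq_add (hK : Bornology.IsBounded K) (h0 : K ∈ 𝓝 (0 : E n)) (p v : E n) :
    ⟪p, v⟫_ℝ ≤ gauge K p ^ 2 + suppFn n K v ^ 2 / 4 := by
  linarith [inner_le_gauge_mul_suppFn hK h0 p v, sq_nonneg (gauge K p - suppFn n K v / 2)]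

lemma eq_gaugeSqGrad_of_inner_eq (hK : Bornology.IsBounded K) (h0 : K ∈ 𝓝 (0 : E n))
    (hs : HasSmoothBoundary n K) {p v : E n}
    (h : ⟪p, v⟫_ℝ = gauge K p ^ 2 + suppFn n K v ^ 2 / 4) : v = gaugeSqGrad n K p := by
  have hmax : IsLocalMax (fun q => innerSL ℝ v q - gauge K q ^ 2) p := .of_forall fun q => by
    simp only [innerSL_apply_apply, real_inner_comm _ v]
    linarith [inner_le_gauge_sq_add hK h0 q v]
  have hzero := hmax.hasFDerivAt_eq_zero
    ((innerSL ℝ v).hasFDerivAt.fun_sub (hasFDerivAt_gauge_sq h0 hs p))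
  exact innerSL_inj.1 (sub_eq_zero.1 hzero)

lemma gaugeSqGrad_smul (h0 : K ∈ 𝓝 (0 : E n)) (hs : HasSmoothBoundary n K) {c : ℝ} (hc : 0 < c)
    (p : E n) : gaugeSqGrad n K (c • p) = c • gaugeSqGrad n K p := by
  refine ext_inner_right ℝ fun v => mul_left_cancel₀ hc.ne' ?_
  have hscale : HasDerivAt (fun s : ℝ => gauge K (c • p + s • c • v) ^ 2)
      (c ^ 2 * ⟪gaugeSqGrad n K p, v⟫_ℝ) 0 := by
    refine ((hasDerivAt_gauge_sq_line h0 hs p v).const_mul (c ^ 2)).congr_of_eventuallyEq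
      (.of_forall fun s => ?_)
    dsimp only
    rw [smul_comm s, ← smul_add, gauge_smul_of_nonneg hc.le, smul_eq_mul, mul_pow]
  have h := (hasDerivAt_gauge_sq_line h0 hs (c • p) (c • v)).unique hscale
  rw [inner_smul_right] at h
  rw [h, real_inner_smul_left]
  ring

lemma exists_norm_gaugeSqGrad_le (hK : Bornology.IsBounded K) (hc : Convex ℝ K)
    (h0 : K ∈ 𝓝 (0 : E n)) (hs : HasSmoothBoundary n K) :
    ∃ C : ℝ, 0 < C ∧ ∀ p, ‖gaugeSqGrad n K p‖ ≤ C * gauge K p := by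
  obtain ⟨C, hC, h⟩ := exists_norm_le_mul_suppFn hK h0
  refine ⟨C * 2, by positivity, fun p => ?_⟩
  rw [mul_assoc, ← suppFn_gaugeSqGrad hK hc h0 hs]
  exact h _

lemma continuous_gaugeSqGrad (hK : Bornology.IsBounded K) (hc : Convex ℝ K)
    (h0 : K ∈ 𝓝 (0 : E n)) (hs : HasSmoothBoundary n K) : Continuous (gaugeSqGrad n K) := by
  refine continuous_iff_continuousAt.2 fun x => ?_
  rcases eq_or_ne x 0 with rfl | hx
  · obtain ⟨C, -, hC⟩ := exists_norm_gaugeSqGrad_le hK hc h0 hs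
    have hzero : gaugeSqGrad n K 0 = 0 := by simpa using hC 0
    rw [ContinuousAt, hzero]
    refine squeeze_zero_norm hC ?_
    simpa using ((continuous_gauge hc h0).const_mul C).tendsto 0
  · have hsq : ContDiffOn ℝ 1 (fun x => gauge K x ^ 2) {(0 : E n)}ᶜ := hs.pow 2
    have hfderiv := (hsq.continuousOn_fderiv_of_isOpen isOpen_compl_singleton le_rfl).continuousAt
      (isOpen_compl_singleton.mem_nhds hx)
    exact (LinearIsometryEquiv.continuous _).continuousAt.comp hfderiv

end GaugeSqGrad

/-! ## Maximising a quadratic form relative to an asymmetric norm -/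

section AsymmNorm

/-- An asymmetric norm on a real vector space: a positive definite sublinear functional. -/
structure IsAsymmNorm {X : Type*} [AddCommGroup X] [Module ℝ X] (N : X → ℝ) : Prop where
  add_le : ∀ x y, N (x + y) ≤ N x + N y
  smul : ∀ c : ℝ, 0 ≤ c → ∀ x, N (c • x) = c * N x
  pos : ∀ x, x ≠ 0 → 0 < N x

variable {X : Type*} [NormedAddCommGroup X] [NormedSpace ℝ X] {N : X → ℝ}
  {B : LinearMap.BilinForm ℝ X} {V : Submodule ℝ X} {u : X}

lemma IsAsymmNorm.zero (hN : IsAsymmNorm N) : N 0 = 0 := by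
  simpa using hN.smul 0 le_rfl 0

lemma IsAsymmNorm.nonneg (hN : IsAsymmNorm N) (x : X) : 0 ≤ N x := by
  rcases eq_or_ne x 0 with rfl | hx
  · exact hN.zero.ge
  · exact (hN.pos x hx).le

lemma IsAsymmNorm.bilin_le_mul (hN : IsAsymmNorm N) (hB : B.IsSymm) (hu : u ∈ V) (hNu : N u = 1)
    (hBu : 0 ≤ B u u) (hmax : ∀ w ∈ V, B w w ≤ B u u * N w ^ 2) {w : X} (hw : w ∈ V) :
    B u w ≤ B u u * N w := by
  have hquad : HasDerivAt (fun s : ℝ => B u u + s * (2 * B u w) + s ^ 2 * B w w)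
      (2 * B u w) 0 := by
    simpa using (((hasDerivAt_id (0 : ℝ)).mul_const (2 * B u w)).const_add (B u u)).fun_add
      (((hasDerivAt_id (0 : ℝ)).fun_pow 2).mul_const (B w w))
  have hsq : HasDerivAt (fun s : ℝ => B u u * (1 + s * N w) ^ 2) (B u u * (2 * N w)) 0 := by
    simpa using ((((hasDerivAt_id (0 : ℝ)).mul_const (N w)).const_add 1).fun_pow 2).const_mul
      (B u u)
  have hle := derivative_le_of_le_right hquad hsq (by simp) fun s hs => by
    calc B u u + (0 + s) * (2 * B u w) + (0 + s) ^ 2 * B w w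
        = B (u + s • w) (u + s • w) := by
          simp only [map_add, map_smul, LinearMap.add_apply, LinearMap.smul_apply, smul_eq_mul,
            hB.eq w u]
          ring
      _ ≤ B u u * N (u + s • w) ^ 2 := hmax _ (V.add_mem hu (V.smul_mem s hw))
      _ ≤ B u u * (1 + (0 + s) * N w) ^ 2 := by
          gcongr
          · exact hN.nonneg _
          · exact (hN.add_le _ _).trans_eq (by rw [hNu, hN.smul s hs.le, zero_add])
  linarith

variable [FiniteDimensional ℝ X]

lemma IsAsymmNorm.exists_bilin_le (hN : IsAsymmNorm N) (hcont : Continuous N)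
    (hV : V ≠ ⊥) : ∃ u ∈ V, N u = 1 ∧ ∀ w ∈ V, B w w ≤ B u u * N w ^ 2 := by
  have hBcont : Continuous fun w => B w w := by
    simpa using (B.toContinuousBilinearMap.continuous).clm_apply continuous_id
  obtain ⟨v₀, hv₀V, hv₀⟩ := V.exists_mem_ne_zero_of_ne_bot hV
  have hcompact : IsCompact ((V : Set X) ∩ sphere 0 1) :=
    (isCompact_sphere 0 1).inter_left V.closed_of_finiteDimensional
  have hne_zero {w : X} (hw : w ∈ (V : Set X) ∩ sphere 0 1) : w ≠ 0 :=
    ne_zero_of_mem_unit_sphere ⟨w, hw.2⟩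
  obtain ⟨v, hv, hmax⟩ := hcompact.exists_isMaxOn
    ⟨‖v₀‖⁻¹ • v₀, V.smul_mem _ hv₀V, by simp [norm_smul, hv₀]⟩
    (f := fun w => B w w / N w ^ 2) (hBcont.continuousOn.div (hcont.pow 2).continuousOn
      fun w hw => (pow_pos (hN.pos w (hne_zero hw)) 2).ne')
  have hNv := hN.pos v (hne_zero hv)
  refine ⟨(N v)⁻¹ • v, V.smul_mem _ hv.1, ?_, fun w hwV => ?_⟩
  · rw [hN.smul _ (inv_nonneg.2 hNv.le), inv_mul_cancel₀ hNv.ne']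
  · rcases eq_or_ne w 0 with rfl | hw
    · simp [hN.zero]
    have hunit : ‖w‖⁻¹ • w ∈ (V : Set X) ∩ sphere 0 1 :=
      ⟨V.smul_mem _ hwV, by simp [norm_smul, hw]⟩
    have hle : B (‖w‖⁻¹ • w) (‖w‖⁻¹ • w) / N (‖w‖⁻¹ • w) ^ 2 ≤ B v v / N v ^ 2 := hmax hunit
    have hNw := hN.pos w hw
    have hw' := norm_pos_iff.2 hw
    rw [hN.smul _ (by positivity)] at hle
    simp only [map_smul, LinearMap.smul_apply, smul_eq_mul] at hle ⊢
    field_simp at hle ⊢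
    exact hle

theorem IsAsymmNorm.exists_maximizer_and_multiplier (hN : IsAsymmNorm N) (hcont : Continuous N)
    (hB : B.IsSymm) (hV : ∃ w ∈ V, 0 < B w w) :
    ∃ u ∈ V, N u = 1 ∧ 0 < B u u ∧ (∀ w ∈ V, B w w ≤ B u u * N w ^ 2) ∧
      ∃ Λ : X →ₗ[ℝ] ℝ, (∀ w, Λ w ≤ N w) ∧ ∀ w ∈ V, B u w = B u u * Λ w := by
  obtain ⟨w₀, hw₀V, hw₀⟩ := hV
  have hV_ne : V ≠ ⊥ := by
    rintro rfl
    simp [(Submodule.mem_bot ℝ).1 hw₀V] at hw₀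
  obtain ⟨u, huV, hNu, hmax⟩ := hN.exists_bilin_le (B := B) hcont hV_ne
  have hBu : 0 < B u u := pos_of_mul_pos_left (hw₀.trans_le (hmax w₀ hw₀V)) (sq_nonneg _)
  obtain ⟨Λ, hΛ, hΛN⟩ := exists_extension_of_le_sublinear
    ⟨V, (B u u)⁻¹ • (B u).domRestrict V⟩ N (fun c hc x => hN.smul c hc.le x) hN.add_le
    fun w => (inv_mul_le_iff₀ hBu).2 (hN.bilin_le_mul hB huV hNu hBu.le hmax w.2)
  refine ⟨u, huV, hNu, hBu, hmax, Λ, hΛN, fun w hw => ?_⟩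
  have h : Λ w = (B u u)⁻¹ * B u w := hΛ ⟨w, hw⟩
  rw [h, mul_inv_cancel_left₀ hBu.ne']

end AsymmNorm

/-! ## Closed polygons -/

section Polygon

variable {ι : Type*} [Fintype ι]

/-- The closed polygons with edges indexed by `ι`: a polygon is encoded by its edge vectors, and
it closes up when they sum to zero. -/
def closedPolygons (ι V : Type*) [Fintype ι] [AddCommGroup V] [Module ℝ V] :
    Submodule ℝ (ι → V) :=
  LinearMap.ker (∑ i, LinearMap.proj i)

lemma mem_closedPolygons {V : Type*} [AddCommGroup V] [Module ℝ V] {u : ι → V} :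
    u ∈ closedPolygons ι V ↔ ∑ i, u i = 0 := by
  simp [closedPolygons]

section InnerProductSpace

variable {V : Type*} [NormedAddCommGroup V] [InnerProductSpace ℝ V]

lemma exists_eq_sum_inner [FiniteDimensional ℝ V] (Λ : (ι → V) →ₗ[ℝ] ℝ) :
    ∃ p : ι → V, ∀ w, Λ w = ∑ i, ⟪p i, w i⟫_ℝ := by
  classical
  refine ⟨fun i => (InnerProductSpace.toDual ℝ V).symm
    (Λ ∘ₗ LinearMap.single ℝ (fun _ => V) i).toContinuousLinearMap, fun w => ?_⟩
  simp [← map_sum, Finset.univ_sum_single]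

lemma eq_of_forall_closedPolygons_sum_inner_eq_zero {q : ι → V}
    (hq : ∀ w ∈ closedPolygons ι V, ∑ i, ⟪q i, w i⟫_ℝ = 0) (i j : ι) : q i = q j := by
  classical
  have h := hq (Pi.single i (q i - q j) - Pi.single j (q i - q j))
    (mem_closedPolygons.2 (by simp))
  simp only [Pi.sub_apply, inner_sub_right, Finset.sum_sub_distrib, Pi.single_apply,
    apply_ite (inner ℝ _), inner_zero_right, Finset.sum_ite_eq', Finset.mem_univ, if_true] at h
  rw [← sub_eq_zero, ← inner_self_eq_zero (𝕜 := ℝ), inner_sub_left]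
  exact (by simpa only [inner_sub_right] using h)

end InnerProductSpace

section SignedSum

/-- The sign of `i - j`. -/
def orderSign {ι : Type*} [LinearOrder ι] (i j : ι) : ℝ :=
  if j < i then 1 else if i < j then -1 else 0

lemma orderSign_comm {ι : Type*} [LinearOrder ι] (i j : ι) : orderSign j i = -orderSign i j := by
  unfold orderSign
  rcases lt_trichotomy i j with h | rfl | h <;> simp [*, not_lt_of_gt]

variable [LinearOrder ι] {V : Type*} [NormedAddCommGroup V] [NormedSpace ℝ V]

/-- The difference of the partial sums of `u` before and after the index `i`. For the edges of a
closed polygon with vertices `zᵢ` this is `zᵢ + zᵢ₊₁ - 2z₀`. -/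
def signedSum (u : ι → V) (i : ι) : V := ∑ j, orderSign i j • u j

lemma norm_signedSum_le (u : ι → V) (i : ι) : ‖signedSum u i‖ ≤ ∑ j, ‖u j‖ := by
  refine norm_sum_le_of_le _ fun j _ => ?_
  rw [norm_smul]
  refine mul_le_of_le_one_left (norm_nonneg _) ?_
  unfold orderSign
  split_ifs <;> simp

end SignedSum

section AreaForm

variable [LinearOrder ι] {n : ℕ}

/-- The symmetric bilinear form which, on a closed polygon with edges `u`, takes four times the
action `½ ∫ ⟨J z, ż⟩`. -/
def areaForm (ι : Type*) [Fintype ι] [LinearOrder ι] (n : ℕ) :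
    LinearMap.BilinForm ℝ (ι → E n) :=
  LinearMap.mk₂ ℝ (fun u w => ∑ i, ∑ j, orderSign i j * ⟪Jmap n (u j), w i⟫_ℝ)
    (by simp [Jmap_add, inner_add_left, mul_add, Finset.sum_add_distrib])
    (by simp [Jmap_smul, real_inner_smul_left, Finset.mul_sum, mul_left_comm])
    (by simp [inner_add_right, mul_add, Finset.sum_add_distrib])
    (by simp [inner_smul_right, Finset.mul_sum, mul_left_comm])

lemma areaForm_apply (u w : ι → E n) :
    areaForm ι n u w = ∑ i, ⟪Jmap n (signedSum u i), w i⟫_ℝ := by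
  simp only [areaForm, LinearMap.mk₂_apply, signedSum, ← coe_jmapLinearIsometry, map_sum, map_smul,
    sum_inner, real_inner_smul_left]

lemma areaForm_isSymm : (areaForm ι n).IsSymm := by
  refine ⟨fun u w => ?_⟩
  simp only [areaForm, LinearMap.mk₂_apply]
  rw [Finset.sum_comm]
  refine Finset.sum_congr rfl fun i _ => Finset.sum_congr rfl fun j _ => ?_
  rw [orderSign_comm, inner_Jmap_left, real_inner_comm]
  ring

lemma areaForm_self_le (u : ι → E n) : areaForm ι n u u ≤ (∑ i, ‖u i‖) ^ 2 := by
  rw [areaForm_apply, sq, Finset.mul_sum]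
  refine Finset.sum_le_sum fun i _ => (real_inner_le_norm _ _).trans ?_
  rw [norm_Jmap]
  gcongr
  exact norm_signedSum_le u i

lemma sub_eq_inv_smul_of_areaForm_eq {u p : ι → E n} {lam : ℝ} (hlam : lam ≠ 0)
    (h : ∀ w ∈ closedPolygons ι (E n), areaForm ι n u w = lam * ∑ i, ⟪p i, w i⟫_ℝ) (i j : ι) :
    p j - p i = lam⁻¹ • Jmap n (signedSum u j - signedSum u i) := by
  have hconst := eq_of_forall_closedPolygons_sum_inner_eq_zero
    (q := fun i => Jmap n (signedSum u i) - lam • p i) (fun w hw => by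
      simp only [inner_sub_left, real_inner_smul_left, Finset.sum_sub_distrib, ← Finset.mul_sum,
        ← areaForm_apply, h w hw, sub_self]) i j
  rw [eq_inv_smul_iff₀ hlam, Jmap_sub, smul_sub]
  linear_combination (norm := module) hconst

end AreaForm

section PolygonNorm

variable {n : ℕ} {K : Set (E n)}

/-- The discrete counterpart, for polygons with edges in `ℝ^{2n}`, of the `L²` norm of `h_K(ż)`
over a loop parametrised by `[0, 1]`. -/
def polygonNorm (K : Set (E n)) (u : ι → E n) : ℝ :=
  √(Fintype.card ι * ∑ i, suppFn n K (u i) ^ 2)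

lemma polygonNorm_sq (u : ι → E n) :
    polygonNorm K u ^ 2 = Fintype.card ι * ∑ i, suppFn n K (u i) ^ 2 :=
  Real.sq_sqrt (by positivity)

lemma polygonNorm_eq_norm (u : ι → E n) : polygonNorm K u =
    √(Fintype.card ι) * ‖WithLp.toLp 2 fun i => suppFn n K (u i)‖ := by
  simp [polygonNorm, EuclideanSpace.norm_eq]

lemma continuous_polygonNorm (hK : Bornology.IsBounded K) (h0 : K.Nonempty) :
    Continuous (polygonNorm K : (ι → E n) → ℝ) := by
  have := continuous_suppFn hK h0
  unfold polygonNorm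
  fun_prop

lemma isAsymmNorm_polygonNorm (hK : Bornology.IsBounded K) (h0 : K ∈ 𝓝 (0 : E n)) :
    IsAsymmNorm (polygonNorm K : (ι → E n) → ℝ) where
  add_le u w := by
    simp only [polygonNorm_eq_norm, ← mul_add]
    gcongr
    refine le_trans ?_ (norm_add_le _ _)
    simp only [EuclideanSpace.norm_eq, PiLp.add_apply, Real.norm_eq_abs, sq_abs]
    gcongr with i
    · exact suppFn_nonneg (mem_of_mem_nhds h0) _
    · exact suppFn_add_le hK ⟨0, mem_of_mem_nhds h0⟩ _ _
  smul c hc u := by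
    simp only [polygonNorm, Pi.smul_apply, suppFn_smul hc, mul_pow, ← Finset.mul_sum]
    rw [mul_left_comm, Real.sqrt_mul (sq_nonneg c), Real.sqrt_sq hc]
  pos u hu := by
    obtain ⟨i, hi⟩ := Function.ne_iff.1 hu
    have : Nonempty ι := ⟨i⟩
    have hsum : 0 < ∑ i, suppFn n K (u i) ^ 2 := Finset.sum_pos' (fun _ _ => sq_nonneg _)
      ⟨i, Finset.mem_univ i, pow_pos (suppFn_pos hK h0 hi) 2⟩
    unfold polygonNorm
    positivity

lemma sum_norm_le_mul_polygonNorm {C : ℝ} (hC : ∀ v, ‖v‖ ≤ C * suppFn n K v) (hC0 : 0 ≤ C)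
    (u : ι → E n) : ∑ i, ‖u i‖ ≤ C * polygonNorm K u := by
  calc ∑ i, ‖u i‖ ≤ C * ∑ i, suppFn n K (u i) := by
        rw [Finset.mul_sum]
        exact Finset.sum_le_sum fun i _ => hC (u i)
    _ ≤ C * polygonNorm K u := by
        gcongr
        exact Real.le_sqrt_of_sq_le sq_sum_le_card_mul_sum_sq

/-- The Fenchel–Young inequalities of the single edges are equalities because their sum is. -/
lemma eq_gaugeSqGrad_of_sum_inner_le_polygonNorm (hK : Bornology.IsBounded K) (hc : Convex ℝ K)
    (h0 : K ∈ 𝓝 (0 : E n)) (hs : HasSmoothBoundary n K) {p u : ι → E n}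
    (hp : ∀ w : ι → E n, ∑ i, ⟪p i, w i⟫_ℝ ≤ polygonNorm K w) (hu : polygonNorm K u = 1)
    (hpu : ∑ i, ⟪p i, u i⟫_ℝ = 1) :
    ∑ i, gauge K (p i) ^ 2 = Fintype.card ι ∧
      ∀ i, (2 * Fintype.card ι : ℝ) • u i = gaugeSqGrad n K (p i) := by
  set N : ℝ := (Fintype.card ι : ℝ)
  have hu_sq : N * ∑ i, suppFn n K (u i) ^ 2 = 1 := by rw [← polygonNorm_sq, hu, one_pow]
  have hyoung (i : ι) : ⟪p i, (2 * N) • u i⟫_ℝ ≤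
      gauge K (p i) ^ 2 + suppFn n K ((2 * N) • u i) ^ 2 / 4 := inner_le_gauge_sq_add hK h0 _ _
  have hsum_left : ∑ i, ⟪p i, (2 * N) • u i⟫_ℝ = 2 * N := by
    simp_rw [inner_smul_right, ← Finset.mul_sum, hpu, mul_one]
  have hsum_right : ∑ i, (gauge K (p i) ^ 2 + suppFn n K ((2 * N) • u i) ^ 2 / 4) =
      ∑ i, gauge K (p i) ^ 2 + N := by
    rw [Finset.sum_add_distrib, ← Finset.sum_div]
    simp_rw [suppFn_smul (show 0 ≤ 2 * N by positivity), mul_pow, ← Finset.mul_sum]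
    linear_combination N * hu_sq
  have hge : N ≤ ∑ i, gauge K (p i) ^ 2 := by
    linarith [Finset.sum_le_sum fun i (_ : i ∈ Finset.univ) => hyoung i]
  have hle : ∑ i, gauge K (p i) ^ 2 ≤ N := by
    have h := hp fun i => gaugeSqGrad n K (p i)
    simp_rw [polygonNorm, suppFn_gaugeSqGrad hK hc h0 hs, real_inner_comm (gaugeSqGrad n K _),
      inner_gaugeSqGrad_self h0 hs, mul_pow, ← Finset.mul_sum] at h
    have hsq := pow_le_pow_left₀ (by positivity) h 2
    rw [Real.sq_sqrt (by positivity)] at hsq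
    nlinarith
  have hgauge := le_antisymm hle hge
  refine ⟨hgauge, fun i => eq_gaugeSqGrad_of_inner_eq hK h0 hs ?_⟩
  exact (Finset.sum_eq_sum_iff_of_le fun i _ => hyoung i).1
    (by rw [hsum_left, hsum_right, hgauge, two_mul]) i (Finset.mem_univ i)

end PolygonNorm

end Polygon

/-! ## Trapezoidal polygons -/

section TrapezoidalPolygon

variable {m : ℕ}

lemma orderSign_add_one_sub (i j : Fin (m + 1)) :
    orderSign (i + 1) j - orderSign i j = (if j = i then 1 else 0) +
      (if j = i + 1 then 1 else 0) - (if i = Fin.last m then 2 else 0) := by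
  have hsucc := Fin.val_add_one i
  simp only [orderSign, Fin.lt_def, Fin.ext_iff, Fin.val_last] at hsucc ⊢
  rw [hsucc]
  have hj := j.isLt
  split_ifs <;> first | omega | norm_num

lemma signedSum_add_one_sub {V : Type*} [NormedAddCommGroup V] [NormedSpace ℝ V]
    {u : Fin (m + 1) → V} (hu : u ∈ closedPolygons (Fin (m + 1)) V) (i : Fin (m + 1)) :
    signedSum u (i + 1) - signedSum u i = u i + u (i + 1) := by
  simp only [signedSum, ← Finset.sum_sub_distrib, ← sub_smul, orderSign_add_one_sub]
  simp only [sub_smul, add_smul, Finset.sum_sub_distrib, Finset.sum_add_distrib,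
    ← Finset.smul_sum, mem_closedPolygons.1 hu, smul_zero, sub_zero]
  simp

variable {n : ℕ} {K : Set (E n)}

/-- The `p i` are the Lagrange multipliers of a polygon maximising `areaForm / polygonNorm ^ 2`. -/
theorem exists_trapezoidal_polygon (hK : Bornology.IsBounded K) (hc : Convex ℝ K)
    (h0 : K ∈ 𝓝 (0 : E n)) (hs : HasSmoothBoundary n K) {C : ℝ} (hC0 : 0 < C)
    (hC : ∀ v, ‖v‖ ≤ C * suppFn n K v)
    (hpos : ∃ w ∈ closedPolygons (Fin (m + 1)) (E n), 0 < areaForm _ n w w) :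
    ∃ μ : ℝ, C⁻¹ ^ 2 ≤ μ ∧
      (∀ w ∈ closedPolygons (Fin (m + 1)) (E n),
        μ * areaForm _ n w w ≤ polygonNorm K w ^ 2) ∧
      ∃ p : Fin (m + 1) → E n, ∑ i, gauge K (p i) ^ 2 = m + 1 ∧
        (∀ i, p (i + 1) - p i = (μ / (m + 1) / 2) •
          (Jmap n (gaugeSqGrad n K (p i)) + Jmap n (gaugeSqGrad n K (p (i + 1))))) ∧
        ∀ i j, ‖p j - p i‖ ≤ 2 * C * μ := by
  obtain ⟨u, huV, hNu, hlam, hmax, Λ, hΛ, hmult⟩ := (isAsymmNorm_polygonNorm hK h0)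
    |>.exists_maximizer_and_multiplier (continuous_polygonNorm hK ⟨0, mem_of_mem_nhds h0⟩)
      areaForm_isSymm hpos
  set lam := areaForm (Fin (m + 1)) n u u
  have hunorm : ∑ i, ‖u i‖ ≤ C := by
    simpa [hNu] using sum_norm_le_mul_polygonNorm hC hC0.le u
  obtain ⟨p, hp⟩ := exists_eq_sum_inner Λ
  have hΛu : ∑ i, ⟪p i, u i⟫_ℝ = 1 := by
    rw [← hp]
    exact mul_left_cancel₀ hlam.ne' ((hmult u huV).symm.trans (mul_one _).symm)
  obtain ⟨hgauge, hgrad⟩ := eq_gaugeSqGrad_of_sum_inner_le_polygonNorm hK hc h0 hs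
    (fun w => (hp w).symm.trans_le (hΛ w)) hNu hΛu
  rw [Fintype.card_fin, Nat.cast_add_one] at hgauge hgrad
  have hdiff := sub_eq_inv_smul_of_areaForm_eq hlam.ne' fun w hw => by rw [hmult w hw, hp]
  refine ⟨lam⁻¹, ?_, fun w hw => (inv_mul_le_iff₀ hlam).2 (hmax w hw), p, hgauge, ?_, ?_⟩
  · rw [inv_pow]
    exact inv_anti₀ hlam ((areaForm_self_le u).trans (by gcongr))
  · intro i
    rw [hdiff, signedSum_add_one_sub huV, ← hgrad, ← hgrad, ← Jmap_add, ← smul_add, Jmap_smul,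
      smul_smul]
    congr 1
    field_simp
  · intro i j
    rw [hdiff, norm_smul, norm_Jmap, norm_inv, Real.norm_of_nonneg hlam.le, mul_comm]
    gcongr
    linarith [norm_sub_le (signedSum u j) (signedSum u i), norm_signedSum_le u i,
      norm_signedSum_le u j]

lemma exists_periodic_extension {α : Type*} (p : Fin (m + 1) → α) (i₀ : Fin (m + 1)) :
    ∃ P : ℤ → α, P 0 = p i₀ ∧ Function.Periodic P (m + 1) ∧
      ∀ k, ∃ i, P k = p i ∧ P (k + 1) = p (i + 1) := by
  let q : ZMod (m + 1) → α := p
  let a : ZMod (m + 1) := i₀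
  refine ⟨fun k => q (k + a), ?_, fun k => ?_, fun k => ⟨(k + a : ZMod (m + 1)), rfl, ?_⟩⟩
  · exact congrArg q (by simp : ((0 : ℤ) : ZMod (m + 1)) + a = a)
  · have : ((m : ZMod (m + 1)) + 1) = 0 := by exact_mod_cast ZMod.natCast_self (m + 1)
    simp [this]
  · simp only [Int.cast_add, Int.cast_one, add_right_comm]
    rfl

end TrapezoidalPolygon

/-! ## Polygons inscribed in loops -/

section Integral

lemma intervalIntegrable_inner {V : Type*} [NormedAddCommGroup V] [InnerProductSpace ℝ V]
    {c f : ℝ → V} (hc : Continuous c) {a b : ℝ} (hf : IntervalIntegrable f volume a b) :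
    IntervalIntegrable (fun t => ⟪c t, f t⟫_ℝ) volume a b := by
  obtain ⟨B, hB⟩ := isCompact_uIcc.exists_bound_of_continuousOn (s := uIcc a b) hc.continuousOn
  refine (hf.norm.const_mul B).mono_fun'
    (hc.aestronglyMeasurable.inner hf.def'.aestronglyMeasurable) ?_
  refine (ae_restrict_iff' measurableSet_uIoc).2 (.of_forall fun t ht => ?_)
  exact (norm_inner_le_norm (c t) (f t)).trans
    (mul_le_mul_of_nonneg_right (hB t (uIoc_subset_uIcc ht)) (norm_nonneg _))

variable {n : ℕ} {K : Set (E n)} {f : ℝ → E n} {a b : ℝ}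

lemma intervalIntegrable_suppFn (hK : Bornology.IsBounded K) (h0 : (0 : E n) ∈ K)
    (hf : IntervalIntegrable f volume a b) :
    IntervalIntegrable (fun t => suppFn n K (f t)) volume a b := by
  obtain ⟨R, hR⟩ := hK.exists_norm_le
  refine (hf.norm.const_mul R).mono_fun'
    ((continuous_suppFn hK ⟨0, h0⟩).comp_aestronglyMeasurable hf.def'.aestronglyMeasurable)
    (.of_forall fun t => ?_)
  refine (Real.norm_of_nonneg (suppFn_nonneg h0 _)).trans_le ?_
  exact suppFn_le ⟨0, h0⟩ fun x hx => (real_inner_le_norm _ _).trans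
    (mul_le_mul_of_nonneg_right (hR x hx) (norm_nonneg _))

lemma suppFn_integral_le (hK : Bornology.IsBounded K) (h0 : (0 : E n) ∈ K) (hab : a ≤ b)
    (hf : IntervalIntegrable f volume a b) :
    suppFn n K (∫ t in a..b, f t) ≤ ∫ t in a..b, suppFn n K (f t) := by
  refine suppFn_le ⟨0, h0⟩ fun x hx => ?_
  calc ⟪x, ∫ t in a..b, f t⟫_ℝ = ∫ t in a..b, ⟪x, f t⟫_ℝ :=
        ((innerSL ℝ x).intervalIntegral_comp_comm hf).symm
    _ ≤ ∫ t in a..b, suppFn n K (f t) :=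
        integral_mono_on hab (intervalIntegrable_inner continuous_const hf)
          (intervalIntegrable_suppFn hK h0 hf) fun t _ => inner_le_suppFn hK hx (f t)

lemma exists_equipartition {f : ℝ → ℝ} (hf : Monotone f) (hfc : Continuous f) (hab : a ≤ b)
    (hlt : f a < f b) {N : ℕ} (hN : 0 < N) :
    ∃ τ : ℕ → ℝ, τ 0 = a ∧ τ N = b ∧
      ∀ k < N, τ k ≤ τ (k + 1) ∧ f (τ (k + 1)) - f (τ k) = (f b - f a) / N := by
  have hN' : (0 : ℝ) < N := Nat.cast_pos.2 hN
  have hvalue (k : ℕ) (hk : k ≤ N) :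
      ∃ t, f t = f a + k / N * (f b - f a) ∧ (k = 0 → t = a) ∧ (k = N → t = b) := by
    rcases eq_or_ne k 0 with rfl | hk0
    · exact ⟨a, by simp, fun _ => rfl, fun h => absurd h hN.ne⟩
    rcases eq_or_ne k N with rfl | hkN
    · exact ⟨b, by field_simp; ring, fun h => absurd h hk0, fun _ => rfl⟩
    have hk1 : (k / N : ℝ) ≤ 1 := (div_le_one hN').2 (Nat.cast_le.2 hk)
    have hmem : f a + k / N * (f b - f a) ∈ Icc (f a) (f b) :=
      ⟨le_add_of_nonneg_right (mul_nonneg (by positivity) (by linarith)), by nlinarith⟩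
    obtain ⟨t, -, ht⟩ := intermediate_value_Icc hab hfc.continuousOn hmem
    exact ⟨t, ht, fun h => absurd h hk0, fun h => absurd h hkN⟩
  choose! τ hτ hτa hτb using hvalue
  have hstep (k : ℕ) (hk : k < N) : f (τ (k + 1)) - f (τ k) = (f b - f a) / N := by
    rw [hτ k hk.le, hτ (k + 1) hk]
    push_cast
    ring
  refine ⟨τ, hτa 0 hN.le rfl, hτb N le_rfl rfl, fun k hk => ⟨(hf.reflect_lt ?_).le, hstep k hk⟩⟩
  rw [← sub_pos, hstep k hk]
  exact div_pos (sub_pos.2 hlt) hN'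

end Integral

section InscribedPolygon

variable {V : Type*} [NormedAddCommGroup V] [NormedSpace ℝ V] {N : ℕ}

lemma sum_fin_ite_lt {M : Type*} [AddCommMonoid M] {k : ℕ} (hk : k ≤ N) (f : ℕ → M) :
    ∑ j : Fin N, (if (j : ℕ) < k then f j else 0) = ∑ j ∈ Finset.range k, f j := by
  rw [Fin.sum_univ_eq_sum_range fun j => if j < k then f j else 0, ← Finset.sum_filter]
  congr 1
  grind

lemma signedSum_edges (x : ℕ → V) (i : Fin N) :
    signedSum (fun j : Fin N => x (j + 1) - x j) i = x i + x (i + 1) - x 0 - x N := by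
  have hsign (j : Fin N) : orderSign i j • (x (j + 1) - x j) =
      (if (j : ℕ) < i then x (j + 1) - x j else 0) +
        (if (j : ℕ) < i + 1 then x (j + 1) - x j else 0) - (x (j + 1) - x j) := by
    rcases lt_trichotomy i j with h | rfl | h
    · simp [orderSign, h, h.not_gt, (Fin.lt_def.1 h).not_ge]
    · simp [orderSign]
    · simp [orderSign, h, Nat.lt_succ_of_lt (Fin.lt_def.1 h)]
  simp only [signedSum, hsign, Finset.sum_sub_distrib, Finset.sum_add_distrib]
  rw [sum_fin_ite_lt i.isLt.le fun j => x (j + 1) - x j,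
    sum_fin_ite_lt (Nat.succ_le_of_lt i.isLt) fun j => x (j + 1) - x j, Finset.sum_range_sub,
    Finset.sum_range_sub, ← Finset.sum_sub_distrib,
    Fin.sum_univ_eq_sum_range fun j => x (j + 1) - x j, Finset.sum_range_sub]
  abel

lemma areaForm_edges {n : ℕ} {x : ℕ → E n} (hx : x N = x 0) :
    areaForm (Fin N) n (fun j => x (j + 1) - x j) (fun j => x (j + 1) - x j) =
      2 * ∑ i ∈ Finset.range N, ⟪Jmap n (x i), x (i + 1) - x i⟫_ℝ := by
  have hedge (i : Fin N) : ⟪Jmap n (x i + x (i + 1) - x 0 - x N), x (i + 1) - x i⟫_ℝ =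
      2 * ⟪Jmap n (x i), x (i + 1) - x i⟫_ℝ - ⟪Jmap n (x 0 + x N), x (i + 1) - x i⟫_ℝ := by
    have hself := inner_Jmap_self (x (i + 1) - x i)
    simp only [Jmap_add, Jmap_sub, inner_add_left, inner_sub_left] at hself ⊢
    linear_combination hself
  simp only [areaForm_apply, signedSum_edges, hedge, Finset.sum_sub_distrib, ← Finset.mul_sum,
    ← inner_sum]
  rw [← Finset.sum_sub_distrib, Fin.sum_univ_eq_sum_range fun j => x (j + 1) - x j,
    Finset.sum_range_sub, hx, sub_self, inner_zero_right, sub_zero,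
    Fin.sum_univ_eq_sum_range fun j => ⟪Jmap n (x j), x (j + 1) - x j⟫_ℝ]

end InscribedPolygon

section Loop

/-- The length `∫₀^{2π} h_S(ż)` of a `2π`-periodic loop with derivative `dz`, measured with the
support function of `S`; the capacity of `S` is `(½ inf)²` of this quantity. -/
def suppLength (n : ℕ) (S : Set (E n)) (dz : ℝ → E n) : ℝ :=
  ∫ t in (0 : ℝ)..(2 * π), suppFn n S (dz t)

variable {n : ℕ} {p : ℝ} {K : Set (E n)} {z dz : ℝ → E n}

namespace InE

lemma sub_eq_integral (hz : InE n p z dz) (a b : ℝ) : z b - z a = ∫ s in a..b, dz s := by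
  obtain ⟨-, hint, hprim, -⟩ := hz
  rw [hprim b, hprim a, add_sub_add_left_eq_sub,
    integral_interval_sub_left (hint _ _) (hint _ _)]

lemma continuous (hz : InE n p z dz) : Continuous z := by
  obtain ⟨-, hint, hprim, -⟩ := hz
  rw [funext hprim]
  exact continuous_const.add (continuous_primitive hint 0)

lemma apply_two_pi (hz : InE n p z dz) : z (2 * π) = z 0 := by simpa using hz.1 0

lemma integral_inner (hz : InE n p z dz) :
    ∫ t in (0 : ℝ)..(2 * π), ⟪Jmap n (z t), dz t⟫_ℝ = 2 := by
  linarith [hz.2.2.2.2.2]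

lemma intervalIntegrable_inner_Jmap (hz : InE n p z dz) (a b : ℝ) :
    IntervalIntegrable (fun t => ⟪Jmap n (z t), dz t⟫_ℝ) volume a b :=
  intervalIntegrable_inner (continuous_Jmap.comp hz.continuous) (hz.2.1 a b)

lemma abs_integral_inner_sub_inner_chord_le (hz : InE n p z dz) {a b : ℝ} (hab : a ≤ b) :
    |(∫ t in a..b, ⟪Jmap n (z t), dz t⟫_ℝ) - ⟪Jmap n (z a), z b - z a⟫_ℝ| ≤
      (∫ t in a..b, ‖dz t‖) ^ 2 := by
  have hint := hz.2.1
  have hchord : ⟪Jmap n (z a), z b - z a⟫_ℝ = ∫ t in a..b, ⟪Jmap n (z a), dz t⟫_ℝ := by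
    rw [hz.sub_eq_integral]
    exact ((innerSL ℝ (Jmap n (z a))).intervalIntegral_comp_comm (hint a b)).symm
  rw [hchord, ← Real.norm_eq_abs, ← integral_sub (hz.intervalIntegrable_inner_Jmap a b)
    (intervalIntegrable_inner continuous_const (hint a b)), sq,
    ← intervalIntegral.integral_const_mul]
  refine norm_integral_le_of_norm_le hab (.of_forall fun t ht => ?_) ((hint a b).norm.const_mul _)
  rw [← inner_sub_left, ← Jmap_sub]
  refine (norm_inner_le_norm _ _).trans ?_
  rw [norm_Jmap, hz.sub_eq_integral]
  gcongr
  exact (intervalIntegral.norm_integral_le_integral_norm ht.1.le).trans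
    (integral_mono_interval le_rfl ht.1.le ht.2 (.of_forall fun s => norm_nonneg _)
      (hint a b).norm)

lemma four_sub_le_areaForm_edges (hz : InE n p z dz) {N : ℕ} {τ : ℕ → ℝ} (hτ0 : τ 0 = 0)
    (hτN : τ N = 2 * π) (hτ : ∀ k < N, τ k ≤ τ (k + 1)) :
    4 - 2 * ∑ k ∈ Finset.range N, (∫ t in τ k..τ (k + 1), ‖dz t‖) ^ 2 ≤
      areaForm (Fin N) n (fun j => z (τ (j + 1)) - z (τ j))
        (fun j => z (τ (j + 1)) - z (τ j)) := by
  have hsum : ∑ k ∈ Finset.range N, ∫ t in τ k..τ (k + 1), ⟪Jmap n (z t), dz t⟫_ℝ = 2 := by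
    rw [sum_integral_adjacent_intervals fun k _ => hz.intervalIntegrable_inner_Jmap _ _,
      hτ0, hτN, hz.integral_inner]
  have hchord : ∑ k ∈ Finset.range N, ((∫ t in τ k..τ (k + 1), ⟪Jmap n (z t), dz t⟫_ℝ) -
      ⟪Jmap n (z (τ k)), z (τ (k + 1)) - z (τ k)⟫_ℝ) ≤
        ∑ k ∈ Finset.range N, (∫ t in τ k..τ (k + 1), ‖dz t‖) ^ 2 :=
    Finset.sum_le_sum fun k hk => (le_abs_self _).trans
      (hz.abs_integral_inner_sub_inner_chord_le (hτ k (Finset.mem_range.1 hk)))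
  rw [Finset.sum_sub_distrib, hsum] at hchord
  rw [areaForm_edges (x := fun k => z (τ k)) (by rw [hτ0, hτN, hz.apply_two_pi])]
  linarith

lemma suppLength_pos (hz : InE n p z dz) (hK : Bornology.IsBounded K) (h0 : K ∈ 𝓝 (0 : E n)) :
    0 < suppLength n K dz := by
  obtain ⟨C, -, hC⟩ := exists_norm_le_mul_suppFn hK h0
  have hpi : (0 : ℝ) ≤ 2 * π := by positivity
  have h0' := mem_of_mem_nhds h0
  have hlength : ∫ t in (0 : ℝ)..(2 * π), ‖dz t‖ ≤ C * suppLength n K dz := by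
    rw [suppLength, ← intervalIntegral.integral_const_mul]
    exact integral_mono_on hpi (hz.2.1 _ _).norm
      ((intervalIntegrable_suppFn hK h0' (hz.2.1 _ _)).const_mul C) fun t _ => hC (dz t)
  have hchord := hz.abs_integral_inner_sub_inner_chord_le hpi
  rw [hz.apply_two_pi, hz.integral_inner, sub_self, inner_zero_right, sub_zero] at hchord
  refine (integral_nonneg hpi fun t _ => suppFn_nonneg h0' _).lt_of_ne fun h => ?_
  rw [suppLength, ← h, mul_zero] at hlength
  rw [hlength.antisymm (integral_nonneg hpi fun t _ => norm_nonneg _)] at hchord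
  norm_num at hchord

lemma exists_partition (hz : InE n p z dz) (hK : Bornology.IsBounded K) (h0 : K ∈ 𝓝 (0 : E n))
    {N : ℕ} (hN : 0 < N) :
    ∃ τ : ℕ → ℝ, τ 0 = 0 ∧ τ N = 2 * π ∧ ∀ k < N, τ k ≤ τ (k + 1) ∧
      ∫ t in τ k..τ (k + 1), suppFn n K (dz t) = suppLength n K dz / N := by
  have h0' := mem_of_mem_nhds h0
  have hint (a b : ℝ) : IntervalIntegrable (fun t => suppFn n K (dz t)) volume a b :=
    intervalIntegrable_suppFn hK h0' (hz.2.1 a b)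
  have hsub (a b : ℝ) : (∫ s in (0 : ℝ)..b, suppFn n K (dz s)) -
      ∫ s in (0 : ℝ)..a, suppFn n K (dz s) = ∫ s in a..b, suppFn n K (dz s) :=
    integral_interval_sub_left (hint _ _) (hint _ _)
  have hmono : Monotone fun t => ∫ s in (0 : ℝ)..t, suppFn n K (dz s) := fun a b hab => by
    rw [← sub_nonneg, hsub]
    exact integral_nonneg hab fun s _ => suppFn_nonneg h0' _
  obtain ⟨τ, hτ0, hτN, hτ⟩ := exists_equipartition hmono (continuous_primitive hint 0)
    (by positivity : (0 : ℝ) ≤ 2 * π) (by simpa [suppLength] using hz.suppLength_pos hK h0) hN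
  exact ⟨τ, hτ0, hτN, fun k hk => ⟨(hτ k hk).1, by simpa [hsub, suppLength] using (hτ k hk).2⟩⟩

theorem exists_inscribed_polygon (hz : InE n p z dz) (hK : Bornology.IsBounded K)
    (h0 : K ∈ 𝓝 (0 : E n)) {C : ℝ} (hC : ∀ u, ‖u‖ ≤ C * suppFn n K u) {N : ℕ} (hN : 0 < N) :
    ∃ u ∈ closedPolygons (Fin N) (E n), polygonNorm K u ^ 2 ≤ suppLength n K dz ^ 2 ∧
      4 - 2 * C ^ 2 * suppLength n K dz ^ 2 / N ≤ areaForm (Fin N) n u u := by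
  obtain ⟨τ, hτ0, hτN, hτ⟩ := hz.exists_partition hK h0 hN
  have h0' := mem_of_mem_nhds h0
  have hN' : (N : ℝ) ≠ 0 := by positivity
  set ℓ := suppLength n K dz
  refine ⟨fun j => z (τ (j + 1)) - z (τ j), mem_closedPolygons.2 ?_, ?_,
    le_trans ?_ (hz.four_sub_le_areaForm_edges hτ0 hτN fun k hk => (hτ k hk).1)⟩
  · rw [Fin.sum_univ_eq_sum_range fun j => z (τ (j + 1)) - z (τ j),
      Finset.sum_range_sub fun j => z (τ j), hτ0, hτN, hz.apply_two_pi, sub_self]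
  · have hedge (j : Fin N) : suppFn n K (z (τ (j + 1)) - z (τ j)) ≤ ℓ / N := by
      rw [← (hτ j j.isLt).2, hz.sub_eq_integral]
      exact suppFn_integral_le hK h0' (hτ j j.isLt).1 (hz.2.1 _ _)
    rw [polygonNorm_sq, Fintype.card_fin]
    calc (N : ℝ) * ∑ j : Fin N, suppFn n K (z (τ (j + 1)) - z (τ j)) ^ 2
        ≤ N * ∑ j : Fin N, (ℓ / N) ^ 2 := by
          gcongr with j
          exacts [suppFn_nonneg h0' _, hedge j]
      _ = ℓ ^ 2 := by simp; field_simp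
  · have harc (k : ℕ) (hk : k < N) : ∫ t in τ k..τ (k + 1), ‖dz t‖ ≤ C * (ℓ / N) := by
      rw [← (hτ k hk).2, ← intervalIntegral.integral_const_mul]
      exact integral_mono_on (hτ k hk).1 (hz.2.1 _ _).norm
        ((intervalIntegrable_suppFn hK h0' (hz.2.1 _ _)).const_mul C) fun t _ => hC (dz t)
    calc 4 - 2 * C ^ 2 * ℓ ^ 2 / N = 4 - 2 * ∑ k ∈ Finset.range N, (C * (ℓ / N)) ^ 2 := by
          simp; field_simp
      _ ≤ 4 - 2 * ∑ k ∈ Finset.range N, (∫ t in τ k..τ (k + 1), ‖dz t‖) ^ 2 := by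
          gcongr with k hk
          exacts [integral_nonneg (hτ k (Finset.mem_range.1 hk)).1 fun t _ => norm_nonneg _,
            harc k (Finset.mem_range.1 hk)]

end InE

end Loop

/-! ## The trapezoidal rule -/

section TrapezoidalRule

variable {V : Type*} [NormedAddCommGroup V] [NormedSpace ℝ V] {W : V → V}

/-- `P` is an orbit of the trapezoidal rule with step `h` for the differential equation
`ẋ = W(x)`. -/
def IsTrapezoidalOrbit (W : V → V) (h : ℝ) (P : ℤ → V) : Prop :=
  ∀ k, P (k + 1) - P k = (h / 2) • (W (P k) + W (P (k + 1)))

lemma IsTrapezoidalOrbit.norm_sub_sub_smul_le {h : ℝ} {P : ℤ → V} (hP : IsTrapezoidalOrbit W h P)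
    (hh : 0 ≤ h) (w : V) {ε : ℝ} {k l : ℤ} (hkl : k ≤ l)
    (hε : ∀ i ∈ Icc k l, ‖W (P i) - w‖ ≤ ε) :
    ‖P l - P k - ((l - k) * h) • w‖ ≤ (l - k) * h * ε := by
  induction l, hkl using Int.leInduction with
  | base => simp
  | succ l hkl ih =>
    have hnew : ‖(h / 2) • ((W (P l) - w) + (W (P (l + 1)) - w))‖ ≤ h / 2 * (ε + ε) := by
      rw [norm_smul, Real.norm_of_nonneg (by positivity)]
      gcongr
      exact norm_add_le_of_le (hε l ⟨hkl, by lia⟩) (hε (l + 1) ⟨by lia, le_rfl⟩)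
    have hsplit : P (l + 1) - P k - (((l + 1 : ℤ) - k) * h) • w =
        (P l - P k - ((l - k) * h) • w) + (h / 2) • ((W (P l) - w) + (W (P (l + 1)) - w)) := by
      rw [← sub_add_sub_cancel (P (l + 1)) (P l) (P k), hP l]
      push_cast
      module
    rw [hsplit]
    refine (norm_add_le_of_le (ih fun i hi => hε i ⟨hi.1, by grind⟩) hnew).trans_eq ?_
    push_cast
    ring

lemma IsTrapezoidalOrbit.dist_le {h B : ℝ} {P : ℤ → V} (hP : IsTrapezoidalOrbit W h P)
    (hh : 0 ≤ h) (hB : ∀ k, ‖W (P k)‖ ≤ B) {k l : ℤ} (hkl : k ≤ l) :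
    dist (P l) (P k) ≤ (l - k) * h * B := by
  simpa [dist_eq_norm] using hP.norm_sub_sub_smul_le hh 0 hkl fun i _ => by simpa using hB i

lemma tendsto_floor_mul_div (s : ℝ) :
    Tendsto (fun N : ℕ => (⌊(N : ℝ) * s⌋ : ℝ) / N) atTop (𝓝 s) := by
  have hlower : Tendsto (fun N : ℕ => s - 1 / (N : ℝ)) atTop (𝓝 s) := by
    simpa using tendsto_const_nhds.sub (tendsto_one_div_atTop_nhds_zero_nat (𝕜 := ℝ))
  refine tendsto_of_tendsto_of_tendsto_of_le_of_le' hlower tendsto_const_nhds ?_ ?_ <;>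
    filter_upwards [eventually_gt_atTop 0] with N hN
  · field_simp
    exact (Int.sub_one_lt_floor _).le
  · field_simp
    exact Int.floor_le _

lemma hasDerivAt_of_continuous_right_deriv [CompleteSpace V] {f f' : ℝ → V} (hf : Continuous f)
    (hf' : Continuous f') (hderiv : ∀ t, HasDerivWithinAt f (f' t) (Ioi t) t) (t : ℝ) :
    HasDerivAt f (f' t) t := by
  have hprim (s : ℝ) : f s = f 0 + ∫ r in (0 : ℝ)..s, f' r := by
    rw [integral_eq_sub_of_hasDeriv_right hf.continuousOn (fun r _ => hderiv r)
      (hf'.intervalIntegrable 0 s), add_sub_cancel]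
  exact ((hf'.integral_hasStrictDerivAt 0 t).hasDerivAt.const_add (f 0)).congr_of_eventuallyEq
    (.of_forall hprim)

section Limit

variable {ι : Type*} {l : Filter ι} {N : ι → ℕ} {P : ι → ℤ → V} {μ : ι → ℝ} {b R : ℝ}

lemma eventually_forall_dist_lt (hN : Tendsto N l atTop) (hμb : ∀ i, μ i ∈ Icc 0 b)
    (hP : ∀ i, IsTrapezoidalOrbit W (μ i / N i) (P i)) {B δ : ℝ} (hB0 : 0 ≤ B)
    (hB : ∀ i k, ‖W (P i k)‖ ≤ B) {s t : ℝ} (hδ : (t - s) * b * B < δ) :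
    ∀ᶠ i in l, ∀ k ∈ Icc ⌊(N i : ℝ) * s⌋ ⌊(N i : ℝ) * t⌋,
      dist (P i k) (P i ⌊(N i : ℝ) * s⌋) < δ := by
  have htime : Tendsto (fun i => ((⌊(N i : ℝ) * t⌋ : ℝ) / N i - ⌊(N i : ℝ) * s⌋ / N i) * b * B) l
      (𝓝 ((t - s) * b * B)) :=
    ((((tendsto_floor_mul_div t).comp hN).sub
      ((tendsto_floor_mul_div s).comp hN)).mul_const b).mul_const B
  filter_upwards [htime.eventually_lt_const hδ] with i hi k hk
  have hkt : (k : ℝ) ≤ ⌊(N i : ℝ) * t⌋ := Int.cast_le.2 hk.2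
  have hsk : (⌊(N i : ℝ) * s⌋ : ℝ) ≤ k := Int.cast_le.2 hk.1
  calc dist (P i k) (P i ⌊(N i : ℝ) * s⌋) ≤ (k - ⌊(N i : ℝ) * s⌋) * (μ i / N i) * B :=
        (hP i).dist_le (div_nonneg (hμb i).1 (Nat.cast_nonneg _)) (hB i) hk.1
    _ ≤ (⌊(N i : ℝ) * t⌋ - ⌊(N i : ℝ) * s⌋) * (b / N i) * B := by
        gcongr
        exacts [div_nonneg (hμb i).1 (Nat.cast_nonneg _), by linarith, (hμb i).2]
    _ = ((⌊(N i : ℝ) * t⌋ : ℝ) / N i - ⌊(N i : ℝ) * s⌋ / N i) * b * B := by ring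
    _ < δ := hi

variable [l.NeBot] {p : ℝ → V} {μ' : ℝ}

lemma norm_limit_sub_sub_smul_le (hN : Tendsto N l atTop) (hμ0 : ∀ i, 0 ≤ μ i)
    (hμ : Tendsto μ l (𝓝 μ')) (hP : ∀ i, IsTrapezoidalOrbit W (μ i / N i) (P i))
    (hp : ∀ t, Tendsto (fun i => P i ⌊(N i : ℝ) * t⌋) l (𝓝 (p t))) {s t : ℝ} (hst : s ≤ t)
    {w : ι → V} {w' : V} (hw : Tendsto w l (𝓝 w')) {ε : ℝ}
    (hε : ∀ᶠ i in l, ∀ k ∈ Icc ⌊(N i : ℝ) * s⌋ ⌊(N i : ℝ) * t⌋, ‖W (P i k) - w i‖ ≤ ε) :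
    ‖p t - p s - ((t - s) * μ') • w'‖ ≤ (t - s) * μ' * ε := by
  have htime : Tendsto (fun i => ((⌊(N i : ℝ) * t⌋ : ℝ) - ⌊(N i : ℝ) * s⌋) * (μ i / N i)) l
      (𝓝 ((t - s) * μ')) :=
    ((((tendsto_floor_mul_div t).comp hN).sub ((tendsto_floor_mul_div s).comp hN)).mul hμ).congr
      fun i => by simp only [Function.comp_apply]; ring
  refine le_of_tendsto_of_tendsto (((hp t).sub (hp s)).sub (htime.smul hw)).norm
    (htime.mul_const ε) (hε.mono fun i hi => ?_)
  exact (hP i).norm_sub_sub_smul_le (div_nonneg (hμ0 i) (Nat.cast_nonneg _)) (w i)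
    (Int.floor_mono (by gcongr)) hi

lemma continuous_limit (hN : Tendsto N l atTop) (hμ : Tendsto μ l (𝓝 μ')) (hμ0 : ∀ i, 0 ≤ μ i)
    (hP : ∀ i, IsTrapezoidalOrbit W (μ i / N i) (P i))
    (hp : ∀ t, Tendsto (fun i => P i ⌊(N i : ℝ) * t⌋) l (𝓝 (p t))) {B : ℝ}
    (hB : ∀ i k, ‖W (P i k)‖ ≤ B) : Continuous p := by
  have hlip (s t : ℝ) (hst : s ≤ t) : ‖p t - p s‖ ≤ μ' * B * |t - s| := by
    rw [abs_of_nonneg (sub_nonneg.2 hst)]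
    have h := norm_limit_sub_sub_smul_le hN hμ0 hμ hP hp hst (tendsto_const_nhds (x := (0 : V)))
      (.of_forall fun i k _ => by simpa using hB i k)
    rw [smul_zero, sub_zero] at h
    linarith
  have hlip' : LipschitzWith (μ' * B).toNNReal p := .of_dist_le' fun s t => by
    rw [dist_eq_norm, Real.dist_eq]
    rcases le_total t s with hts | hts
    · exact hlip t s hts
    · rw [norm_sub_rev, abs_sub_comm]
      exact hlip s t hts
  exact hlip'.continuous

lemma hasDerivWithinAt_limit (hN : Tendsto N l atTop) (hμ : Tendsto μ l (𝓝 μ'))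
    (hμb : ∀ i, μ i ∈ Icc 0 b) (hP : ∀ i, IsTrapezoidalOrbit W (μ i / N i) (P i))
    (hp : ∀ t, Tendsto (fun i => P i ⌊(N i : ℝ) * t⌋) l (𝓝 (p t))) {S : Set V} (hS : IsCompact S)
    (hW : Continuous W) (hPS : ∀ i k, P i k ∈ S) (t : ℝ) :
    HasDerivWithinAt p (μ' • W (p t)) (Ioi t) t := by
  obtain ⟨B, hB⟩ := hS.exists_bound_of_continuousOn hW.continuousOn
  obtain ⟨i₀⟩ : Nonempty ι := l.nonempty_of_neBot
  have hB0 : 0 ≤ B := (norm_nonneg _).trans (hB _ (hPS i₀ 0))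
  have hb : 0 ≤ b := (hμb i₀).1.trans (hμb i₀).2
  have hμ'b : μ' ≤ b := le_of_tendsto' hμ fun i => (hμb i).2
  rw [hasDerivWithinAt_iff_isLittleO, Asymptotics.isLittleO_iff]
  intro c hc
  obtain ⟨δ, hδ, hWδ⟩ := Metric.uniformContinuousOn_iff.1
    (hS.uniformContinuousOn_of_continuous hW.continuousOn) (c / (b + 1)) (by positivity)
  have hclose : ∀ᶠ s in 𝓝[>] t, (s - t) * b * B < δ :=
    (ContinuousAt.eventually_lt (by fun_prop) continuousAt_const (by simpa)).filter_mono
      nhdsWithin_le_nhds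
  filter_upwards [hclose, self_mem_nhdsWithin] with s hs hts
  have hst : 0 < s - t := sub_pos.2 hts
  have hest := norm_limit_sub_sub_smul_le hN (fun i => (hμb i).1) hμ hP hp (le_of_lt hts)
    ((hW.tendsto _).comp (hp t)) (ε := c / (b + 1)) ?_
  · rw [← smul_smul] at hest
    refine hest.trans ?_
    rw [Real.norm_of_nonneg hst.le, mul_assoc, mul_comm]
    gcongr
    rw [mul_div_assoc', div_le_iff₀ (by positivity)]
    nlinarith
  · filter_upwards [eventually_forall_dist_lt hN hμb hP hB0 (fun i k => hB _ (hPS i k)) hs]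
      with i hi k hk
    exact (dist_eq_norm (W (P i k)) _).symm.trans_le (hWδ _ (hPS i k) _ (hPS i _) (hi k hk)).le

theorem exists_hasDerivAt_limit [ProperSpace V] (hW : Continuous W) (hN : Tendsto N l atTop)
    (hμb : ∀ i, μ i ∈ Icc 0 b) (hP : ∀ i, IsTrapezoidalOrbit W (μ i / N i) (P i))
    (hper : ∀ i, Function.Periodic (P i) (N i)) (hR : ∀ i k, ‖P i k‖ ≤ R) :
    ∃ 𝒰 : Ultrafilter ι, ↑𝒰 ≤ l ∧ ∃ (p : ℝ → V) (μ' : ℝ), Tendsto μ 𝒰 (𝓝 μ') ∧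
      (∀ t, HasDerivAt p (μ' • W (p t)) t) ∧ Function.Periodic p 1 ∧
        Tendsto (fun i => P i 0) 𝒰 (𝓝 (p 0)) := by
  have h𝒰 := Ultrafilter.of_le l
  set 𝒰 := Ultrafilter.of l
  have hPS (i : ι) (k : ℤ) : P i k ∈ closedBall 0 R := mem_closedBall_zero_iff.2 (hR i k)
  obtain ⟨μ', -, hμ⟩ := isCompact_Icc.ultrafilter_le_nhds' (𝒰.map μ)
    (show ∀ᶠ i in (𝒰 : Filter ι), μ i ∈ Icc 0 b from .of_forall hμb)
  have hlim (t : ℝ) : ∃ x, Tendsto (fun i => P i ⌊(N i : ℝ) * t⌋) 𝒰 (𝓝 x) := by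
    obtain ⟨x, -, hx⟩ := (isCompact_closedBall (0 : V) R).ultrafilter_le_nhds'
      (𝒰.map fun i => P i ⌊(N i : ℝ) * t⌋)
      (show ∀ᶠ i in (𝒰 : Filter ι), P i ⌊(N i : ℝ) * t⌋ ∈ _ from .of_forall fun i => hPS i _)
    exact ⟨x, hx⟩
  choose p hp using hlim
  obtain ⟨B, hB⟩ := (isCompact_closedBall (0 : V) R).exists_bound_of_continuousOn hW.continuousOn
  have hN' := hN.mono_left h𝒰
  have hpc : Continuous p :=
    continuous_limit hN' hμ (fun i => (hμb i).1) hP hp fun i k => hB _ (hPS i k)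
  refine ⟨𝒰, h𝒰, p, μ', hμ, hasDerivAt_of_continuous_right_deriv hpc ((hW.comp hpc).const_smul μ')
    (hasDerivWithinAt_limit hN' hμ hμb hP hp (isCompact_closedBall 0 R) hW hPS), fun t => ?_,
    by simpa using hp 0⟩
  refine tendsto_nhds_unique (hp (t + 1)) ((hp t).congr fun i => ?_)
  rw [mul_add, mul_one, Int.floor_add_natCast, hper]

end Limit

end TrapezoidalRule

/-! ## Existence of closed characteristics -/

section ClosedCharacteristic

variable {n : ℕ} {K : Set (E n)} {γ p : ℝ → E n} {T₀ d μ : ℝ}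

lemma inner_neg_Jmap_deriv_self (h0 : K ∈ 𝓝 (0 : E n)) (hs : HasSmoothBoundary n K)
    (hγ : ∀ t, deriv γ t = d • Jmap n (gaugeSqGrad n K (γ t))) (hg : ∀ t, gauge K (γ t) = 1)
    (t : ℝ) : ⟪-Jmap n (deriv γ t), γ t⟫_ℝ = 2 * d := by
  rw [hγ, Jmap_smul, Jmap_Jmap, smul_neg, neg_neg, real_inner_smul_left,
    inner_gaugeSqGrad_self h0 hs, hg]
  ring

lemma action_eq_mul (h0 : K ∈ 𝓝 (0 : E n)) (hs : HasSmoothBoundary n K)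
    (hγ : ∀ t, deriv γ t = d • Jmap n (gaugeSqGrad n K (γ t))) (hg : ∀ t, gauge K (γ t) = 1) :
    action n γ T₀ = d * T₀ := by
  simp only [action, inner_neg_Jmap_deriv_self h0 hs hγ hg, intervalIntegral.integral_const,
    smul_eq_mul]
  ring

lemma gauge_eq_gauge_zero (h0 : K ∈ 𝓝 (0 : E n)) (hs : HasSmoothBoundary n K)
    (hp : ∀ t, HasDerivAt p (μ • Jmap n (gaugeSqGrad n K (p t))) t) (t : ℝ) :
    gauge K (p t) = gauge K (p 0) := by
  have hderiv (t : ℝ) : HasDerivAt (fun t => gauge K (p t) ^ 2) 0 t := by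
    have h := (hasFDerivAt_gauge_sq h0 hs (p t)).comp_hasDerivAt t (hp t)
    rwa [innerSL_apply_apply, inner_smul_right, real_inner_comm, inner_Jmap_self, mul_zero] at h
  exact (pow_left_inj₀ (gauge_nonneg _) (gauge_nonneg _) two_ne_zero).1
    (is_const_of_deriv_eq_zero (fun t => (hderiv t).differentiableAt) (fun t => (hderiv t).deriv)
      t 0)

lemma isClosedCharacteristic_inv_gauge_smul (hK : Bornology.IsBounded K) (hc : Convex ℝ K)
    (h0 : K ∈ 𝓝 (0 : E n)) (hs : HasSmoothBoundary n K) (hT₀ : 0 < T₀) (hμ : 0 < μ)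
    (hp : ∀ t, HasDerivAt p (μ • Jmap n (gaugeSqGrad n K (p t))) t)
    (hper : Function.Periodic p T₀) (hp0 : 0 < gauge K (p 0)) :
    IsClosedCharacteristic n K (fun t => (gauge K (p 0))⁻¹ • p t) T₀ ∧
      action n (fun t => (gauge K (p 0))⁻¹ • p t) T₀ = μ * T₀ := by
  set γ : ℝ → E n := fun t => (gauge K (p 0))⁻¹ • p t
  have hg (t : ℝ) : gauge K (γ t) = 1 := by
    rw [gauge_smul_of_nonneg (inv_nonneg.2 hp0.le), gauge_eq_gauge_zero h0 hs hp t, smul_eq_mul,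
      inv_mul_cancel₀ hp0.ne']
  have hγ (t : ℝ) : HasDerivAt γ (μ • Jmap n (gaugeSqGrad n K (γ t))) t := by
    rw [gaugeSqGrad_smul h0 hs (inv_pos.2 hp0), Jmap_smul, smul_comm]
    exact (hp t).fun_const_smul _
  have hderiv (t : ℝ) : deriv γ t = μ • Jmap n (gaugeSqGrad n K (γ t)) := (hγ t).deriv
  have hdiff : Differentiable ℝ γ := fun t => (hγ t).differentiableAt
  have haction (T : ℝ) : action n γ T = μ * T := action_eq_mul h0 hs hderiv hg
  refine ⟨⟨hT₀, fun t => congrArg (_ • ·) (hper t), contDiff_one_iff_deriv.2 ⟨hdiff, ?_⟩, ?_,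
    fun t => (gauge_eq_one_iff_mem_frontier hc h0).1 (hg t), μ, hμ, hderiv⟩, haction T₀⟩
  · rw [funext hderiv]
    exact (continuous_Jmap.comp ((continuous_gaugeSqGrad hK hc h0 hs).comp
      hdiff.continuous)).const_smul μ
  · by_contra! hconst
    have hzero : deriv γ = 0 := by
      rw [funext fun t => hconst t 0]
      exact deriv_const' _
    have h := inner_neg_Jmap_deriv_self h0 hs hderiv hg 0
    rw [hzero, Pi.zero_apply, ← zero_smul ℝ (0 : E n), Jmap_smul, zero_smul, neg_zero,
      inner_zero_left] at h
    linarith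

variable {z dz : ℝ → E n} {C R q : ℝ}

lemma exists_periodic_trapezoidalOrbit (hK : Bornology.IsBounded K) (hc : Convex ℝ K)
    (h0 : K ∈ 𝓝 (0 : E n)) (hs : HasSmoothBoundary n K) (hC0 : 0 < C)
    (hC : ∀ v, ‖v‖ ≤ C * suppFn n K v) (hR : K ⊆ closedBall 0 R) (hz : InE n q z dz) {N : ℕ}
    (hN : 0 < N) (hlarge : 2 < 4 - 2 * C ^ 2 * suppLength n K dz ^ 2 / N) :
    ∃ μ ∈ Icc (C⁻¹ ^ 2) (suppLength n K dz ^ 2 / 2),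
      (∀ y dy, InE n q y dy →
        μ * (4 - 2 * C ^ 2 * suppLength n K dy ^ 2 / N) ≤ suppLength n K dy ^ 2) ∧
      ∃ P : ℤ → E n, IsTrapezoidalOrbit (fun x => Jmap n (gaugeSqGrad n K x)) (μ / N) P ∧
        Function.Periodic P N ∧ 1 ≤ gauge K (P 0) ∧
        ∀ k, ‖P k‖ ≤ R + C * suppLength n K dz ^ 2 := by
  obtain ⟨m, rfl⟩ : ∃ m, N = m + 1 := ⟨N - 1, by omega⟩
  obtain ⟨u, hu, -, huarea⟩ := hz.exists_inscribed_polygon hK h0 hC hN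
  obtain ⟨μ, hμC, hμ, p, hgauge, hp, hdiam⟩ :=
    exists_trapezoidal_polygon hK hc h0 hs hC0 hC ⟨u, hu, by linarith⟩
  have hμ0 : 0 < μ := (by positivity : 0 < C⁻¹ ^ 2).trans_le hμC
  have hlen {y dy : ℝ → E n} (hy : InE n q y dy) :
      μ * (4 - 2 * C ^ 2 * suppLength n K dy ^ 2 / ↑(m + 1)) ≤ suppLength n K dy ^ 2 := by
    obtain ⟨w, hw, hwnorm, hwarea⟩ := hy.exists_inscribed_polygon hK h0 hC hN
    calc _ ≤ μ * areaForm _ n w w := by gcongr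
      _ ≤ polygonNorm K w ^ 2 := hμ w hw
      _ ≤ _ := hwnorm
  have hμb : μ ≤ suppLength n K dz ^ 2 / 2 := by nlinarith [hlen hz]
  have hmean : ∑ i, gauge K (p i) ^ 2 = ∑ _i : Fin (m + 1), 1 := by simp [hgauge]
  obtain ⟨i₀, -, hi₀⟩ := Finset.exists_le_of_sum_le Finset.univ_nonempty hmean.ge
  obtain ⟨j, -, hj⟩ := Finset.exists_le_of_sum_le Finset.univ_nonempty hmean.le
  have hpj : ‖p j‖ ≤ R := mem_closedBall_zero_iff.1 <| closure_minimal hR isClosed_closedBall <|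
    (gauge_le_one_iff_mem_closure hc h0).1 ((sq_le_one_iff₀ (gauge_nonneg _)).1 hj)
  obtain ⟨P, hP0, hper, hP⟩ := exists_periodic_extension p i₀
  refine ⟨μ, ⟨hμC, hμb⟩, fun y dy => hlen, P, fun k => ?_, by exact_mod_cast hper, ?_, fun k => ?_⟩
  · obtain ⟨i, hi, hi'⟩ := hP k
    rw [hi, hi', hp, Nat.cast_add_one]
  · exact hP0 ▸ (one_le_sq_iff₀ (gauge_nonneg _)).1 hi₀
  · obtain ⟨i, hi, -⟩ := hP k
    rw [hi, ← add_sub_cancel (p j) (p i)]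
    refine norm_add_le_of_le hpj ((hdiam j i).trans ?_)
    calc 2 * C * μ ≤ 2 * C * (suppLength n K dz ^ 2 / 2) := by gcongr
      _ = C * suppLength n K dz ^ 2 := by ring

theorem exists_isClosedCharacteristic_action_le (hK : Bornology.IsBounded K) (hc : Convex ℝ K)
    (h0 : K ∈ 𝓝 (0 : E n)) (hs : HasSmoothBoundary n K) (hz : InE n q z dz) :
    ∃ γ, IsClosedCharacteristic n K γ 1 ∧
      ∀ y dy, InE n q y dy → action n γ 1 ≤ suppLength n K dy ^ 2 / 4 := by
  obtain ⟨C, hC0, hC⟩ := exists_norm_le_mul_suppFn hK h0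
  obtain ⟨R, hR⟩ := hK.subset_closedBall 0
  have hlim (r : ℝ) : Tendsto (fun N : ℕ => 4 - r / (N : ℝ)) atTop (𝓝 4) := by
    simpa using (tendsto_const_div_atTop_nhds_zero_nat r).const_sub 4
  obtain ⟨N₀, hN₀⟩ := eventually_atTop.1 <| ((hlim (2 * C ^ 2 * suppLength n K dz ^ 2))
    |>.eventually_const_lt (by norm_num : (2 : ℝ) < 4)).and (eventually_gt_atTop 0)
  have horbit (i : ℕ) := exists_periodic_trapezoidalOrbit hK hc h0 hs hC0 hC hR hz
    (hN₀ (i + N₀) (by lia)).2 (hN₀ (i + N₀) (by lia)).1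
  choose μ hμ hμlen P hP hper hgauge hPR using horbit
  have hN : Tendsto (fun i => i + N₀) atTop atTop := tendsto_add_atTop_nat N₀
  obtain ⟨𝒰, h𝒰, p, μ', hμ', hp, hpper, hp0⟩ := exists_hasDerivAt_limit
    (continuous_Jmap.comp (continuous_gaugeSqGrad hK hc h0 hs)) hN
    (fun i => ⟨(by positivity : 0 ≤ C⁻¹ ^ 2).trans (hμ i).1, (hμ i).2⟩) hP hper hPR
  have hμ'0 : 0 < μ' :=
    (by positivity : 0 < C⁻¹ ^ 2).trans_le (ge_of_tendsto' hμ' fun i => (hμ i).1)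
  have hgauge0 : 1 ≤ gauge K (p 0) :=
    ge_of_tendsto' (((continuous_gauge hc h0).tendsto _).comp hp0) hgauge
  obtain ⟨hγ, haction⟩ := isClosedCharacteristic_inv_gauge_smul hK hc h0 hs one_pos hμ'0 hp hpper
    (one_pos.trans_le hgauge0)
  refine ⟨_, hγ, fun y dy hy => ?_⟩
  have hle := le_of_tendsto' (hμ'.mul (((hlim _).comp hN).mono_left h𝒰)) fun i => hμlen i y dy hy
  rw [haction]
  linarith

end ClosedCharacteristic

/-! ## The loop of a closed characteristic -/

section LoopOfClosedCharacteristic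

variable {n : ℕ}

lemma mem_smul_Jmap_image_polarBody_iff {T : Set (E n)} (hT : Bornology.IsBounded T)
    (hne : T.Nonempty) {r : ℝ} (hr : 0 < r) (x : E n) :
    x ∈ r • (Jmap n '' polarBody n T) ↔ suppFn n T (-Jmap n x) ≤ r := by
  have hinner (w : E n) : ⟪r⁻¹ • -Jmap n x, w⟫_ℝ ≤ 1 ↔ ⟪w, -Jmap n x⟫_ℝ ≤ r := by
    rw [real_inner_smul_left, real_inner_comm, inv_mul_le_iff₀ hr, mul_one]
  rw [Set.mem_smul_set_iff_inv_smul_mem₀ hr.ne']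
  constructor
  · rintro ⟨y, hy, hyx⟩
    have hy' : y = r⁻¹ • -Jmap n x := by
      rw [smul_neg, ← Jmap_smul, ← hyx, Jmap_Jmap, neg_neg]
    exact suppFn_le hne fun w hw => (hinner w).1 (hy' ▸ hy w hw)
  · intro h
    refine ⟨r⁻¹ • -Jmap n x, fun w hw => (hinner w).2 ((inner_le_suppFn hT hw _).trans h), ?_⟩
    rw [Jmap_smul, Jmap_neg, Jmap_Jmap, neg_neg]

lemma gauge_Jmap_image_polarBody {T : Set (E n)} (hT : Bornology.IsBounded T)
    (h0 : (0 : E n) ∈ T) (x : E n) :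
    gauge (Jmap n '' polarBody n T) x = suppFn n T (-Jmap n x) := by
  have hnonneg := suppFn_nonneg h0 (-Jmap n x)
  refine csInf_eq_of_forall_ge_of_forall_gt_exists_lt ?_ ?_ ?_
  · exact ⟨suppFn n T (-Jmap n x) + 1, by positivity,
      (mem_smul_Jmap_image_polarBody_iff hT ⟨0, h0⟩ (by positivity) x).2 (by linarith)⟩
  · rintro r ⟨hr, hx⟩
    exact (mem_smul_Jmap_image_polarBody_iff hT ⟨0, h0⟩ hr x).1 hx
  · intro w hw
    obtain ⟨r, hr, hrw⟩ := exists_between hw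
    have hr0 := hnonneg.trans_lt hr
    exact ⟨r, ⟨hr0, (mem_smul_Jmap_image_polarBody_iff hT ⟨0, h0⟩ hr0 x).2 hr.le⟩, hrw⟩

lemma InE.of_hasDerivAt {y dy : ℝ → E n} (hy : ∀ t, HasDerivAt y (dy t) t) (hdy : Continuous dy)
    (hper : Function.Periodic y (2 * π))
    (haction : ∫ t in (0 : ℝ)..(2 * π), ⟪Jmap n (y t), dy t⟫_ℝ = 2) (p : ℝ) :
    InE n p (fun t => y t - (2 * π)⁻¹ • ∫ s in (0 : ℝ)..(2 * π), y s) dy := by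
  set c : E n := (2 * π)⁻¹ • ∫ s in (0 : ℝ)..(2 * π), y s with hc
  have hyc : Continuous y := continuous_iff_continuousAt.2 fun t => (hy t).continuousAt
  have hint (a b : ℝ) : ∫ t in a..b, dy t = y b - y a :=
    integral_eq_sub_of_hasDerivAt (fun t _ => hy t) (hdy.intervalIntegrable a b)
  refine ⟨fun t => congrArg (· - c) (hper t), hdy.intervalIntegrable, fun t => ?_, ?_, ?_, ?_⟩
  · rw [hint]
    module
  · obtain ⟨B, hB⟩ := (isCompact_Icc (a := 0) (b := 2 * π)).exists_bound_of_continuousOn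
      hdy.continuousOn
    exact MemLp.of_bound hdy.aestronglyMeasurable B
      (ae_restrict_of_forall_mem measurableSet_Ioc fun t ht => hB t (Ioc_subset_Icc_self ht))
  · rw [intervalIntegral.integral_sub (hyc.intervalIntegrable _ _) intervalIntegrable_const,
      intervalIntegral.integral_const, hc, sub_zero, smul_inv_smul₀ (by positivity), sub_self]
  · have hconst : ∫ t in (0 : ℝ)..(2 * π), ⟪Jmap n c, dy t⟫_ℝ = 0 := by
      have h := (innerSL ℝ (Jmap n c)).intervalIntegral_comp_comm
        (hdy.intervalIntegrable (μ := volume) 0 (2 * π))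
      simpa [hint, ← hper 0] using h
    simp only [Jmap_sub, inner_sub_left]
    rw [intervalIntegral.integral_sub
      (((continuous_Jmap.comp hyc).inner hdy).intervalIntegrable _ _)
      ((continuous_const.inner hdy).intervalIntegrable _ _), haction, hconst]
    norm_num

lemma hasDerivAt_Jmap {f : ℝ → E n} {f' : E n} {t : ℝ} (hf : HasDerivAt f f' t) :
    HasDerivAt (fun s => Jmap n (f s)) (Jmap n f') t :=
  (jmapLinearIsometry n).toContinuousLinearMap.hasFDerivAt.comp_hasDerivAt t hf

lemma exists_loop_suppLength_eq {γ : ℝ → E n} {T₀ : ℝ} (hγ : ContDiff ℝ 1 γ) (hT₀ : 0 ≤ T₀)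
    (hper : Function.Periodic γ T₀) (haction : 0 < action n γ T₀) (p : ℝ) :
    ∃ z dz, InE n p z dz ∧ ∀ S, suppLength n S dz =
      (∫ t in (0 : ℝ)..T₀, suppFn n S (-Jmap n (deriv γ t))) / √(action n γ T₀) := by
  set r := (√(action n γ T₀))⁻¹
  have hr : r * r * action n γ T₀ = 1 := by
    rw [← mul_inv, Real.mul_self_sqrt haction.le, inv_mul_cancel₀ haction.ne']
  set ω := T₀ / (2 * π)
  have hω : ω * (2 * π) = T₀ := div_mul_cancel₀ _ (by positivity)
  have hrescale (f : ℝ → ℝ) :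
      ω * ∫ t in (0 : ℝ)..(2 * π), f (ω * t) = ∫ t in (0 : ℝ)..T₀, f t := by
    rw [← smul_eq_mul, smul_integral_comp_mul_left, mul_zero, hω]
  let y : ℝ → E n := fun t => r • -Jmap n (γ (ω * t))
  let dy : ℝ → E n := fun t => (r * ω) • -Jmap n (deriv γ (ω * t))
  have hdy : Continuous dy := ((continuous_Jmap.comp
    ((hγ.continuous_deriv le_rfl).comp (continuous_const_mul ω))).neg).const_smul (r * ω)
  have hy (t : ℝ) : HasDerivAt y (dy t) t := by
    have hcomp : HasDerivAt (fun t => γ (ω * t)) (ω • deriv γ (ω * t)) t :=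
      (hγ.differentiable one_ne_zero _).hasDerivAt.scomp t (hasDerivAt_const_mul ω)
    have h := (hasDerivAt_Jmap hcomp).fun_neg.fun_const_smul r
    rwa [Jmap_smul, ← smul_neg, smul_smul] at h
  have hyper : Function.Periodic y (2 * π) := fun t => by
    simp only [y, mul_add, hω, hper _]
  have hyaction : ∫ t in (0 : ℝ)..(2 * π), ⟪Jmap n (y t), dy t⟫_ℝ = 2 := by
    have hinner (t : ℝ) : ⟪Jmap n (y t), dy t⟫_ℝ =
        r * r * (ω * ⟪-Jmap n (deriv γ (ω * t)), γ (ω * t)⟫_ℝ) := by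
      simp only [y, dy, Jmap_smul, Jmap_neg, Jmap_Jmap, neg_neg, real_inner_smul_left,
        real_inner_smul_right, real_inner_comm (γ (ω * t))]
      ring
    simp only [hinner, intervalIntegral.integral_const_mul]
    have hact : ∫ t in (0 : ℝ)..T₀, ⟪-Jmap n (deriv γ t), γ t⟫_ℝ = 2 * action n γ T₀ := by
      rw [action]
      ring
    rw [hrescale fun t => ⟪-Jmap n (deriv γ t), γ t⟫_ℝ, hact]
    linear_combination 2 * hr
  refine ⟨_, dy, .of_hasDerivAt hy hdy hyper hyaction p, fun S => ?_⟩
  simp only [suppLength, dy, suppFn_smul (by positivity : 0 ≤ r * ω),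
    intervalIntegral.integral_const_mul]
  rw [mul_assoc, hrescale fun t => suppFn n S (-Jmap n (deriv γ t)), inv_mul_eq_div]

namespace IsClosedCharacteristic

variable {K : Set (E n)} {γ : ℝ → E n} {T₀ : ℝ}

lemma gauge_eq_one (hγ : IsClosedCharacteristic n K γ T₀) (hc : Convex ℝ K)
    (h0 : K ∈ 𝓝 (0 : E n)) (t : ℝ) : gauge K (γ t) = 1 :=
  (gauge_eq_one_iff_mem_frontier hc h0).2 (hγ.2.2.2.2.1 t)

lemma action_pos (hγ : IsClosedCharacteristic n K γ T₀) (hc : Convex ℝ K)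
    (h0 : K ∈ 𝓝 (0 : E n)) (hs : HasSmoothBoundary n K) : 0 < action n γ T₀ := by
  obtain ⟨hT₀, -, -, -, -, d, hd, hderiv⟩ := id hγ
  rw [action_eq_mul h0 hs hderiv (hγ.gauge_eq_one hc h0)]
  positivity

lemma integral_suppFn (hγ : IsClosedCharacteristic n K γ T₀) (hK : Bornology.IsBounded K)
    (hc : Convex ℝ K) (h0 : K ∈ 𝓝 (0 : E n)) (hs : HasSmoothBoundary n K) :
    ∫ t in (0 : ℝ)..T₀, suppFn n K (-Jmap n (deriv γ t)) = 2 * action n γ T₀ := by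
  obtain ⟨-, -, -, -, -, d, hd, hderiv⟩ := id hγ
  have hg := hγ.gauge_eq_one hc h0
  have hsupp (t : ℝ) : suppFn n K (-Jmap n (deriv γ t)) = d * 2 := by
    rw [hderiv, Jmap_smul, Jmap_Jmap, smul_neg, neg_neg, suppFn_smul hd.le]
    exact congrArg _ ((suppFn_gaugeSqGrad hK hc h0 hs _).trans (by rw [hg, mul_one]))
  rw [action_eq_mul h0 hs hderiv hg]
  simp only [hsupp, intervalIntegral.integral_const, smul_eq_mul]
  ring

theorem exists_loop (hγ : IsClosedCharacteristic n K γ T₀) (hK : Bornology.IsBounded K)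
    (hc : Convex ℝ K) (h0 : K ∈ 𝓝 (0 : E n)) (hs : HasSmoothBoundary n K) (p : ℝ) :
    ∃ z dz, InE n p z dz ∧ suppLength n K dz = 2 * √(action n γ T₀) ∧
      ∀ T : Set (E n), Bornology.IsBounded T → 0 ∈ T → suppLength n T dz =
        lengthIn n (Jmap n '' polarBody n T) γ T₀ / √(action n γ T₀) := by
  obtain ⟨z, dz, hz, hlen⟩ :=
    exists_loop_suppLength_eq hγ.2.2.1 hγ.1.le hγ.2.1 (hγ.action_pos hc h0 hs) p
  refine ⟨z, dz, hz, ?_, fun T hT h0T => ?_⟩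
  · rw [hlen, hγ.integral_suppFn hK hc h0 hs, mul_div_assoc, Real.div_sqrt]
  · simp only [hlen, lengthIn, gauge_Jmap_image_polarBody hT h0T]

end IsClosedCharacteristic

end LoopOfClosedCharacteristic

/-! ## The derivative of the capacity -/

section InfimumOfAffineFunctions

variable {ι : Type*} {A B : ι → ℝ} {i₀ : ι}

lemma iInf_add_zero_mul (hA : ∀ i, A i₀ ≤ A i) : ⨅ i, (A i + 0 * B i) = A i₀ := by
  simp only [zero_mul, add_zero]
  exact IsLeast.csInf_eq ⟨mem_range_self i₀, forall_mem_range.2 hA⟩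

lemma bddBelow_range_add_mul (hA : ∀ i, A i₀ ≤ A i) (hB : ∀ i, 0 ≤ B i) {ε : ℝ} (hε : 0 ≤ ε) :
    BddBelow (range fun i => A i + ε * B i) := by
  refine ⟨A i₀, forall_mem_range.2 fun i => ?_⟩
  have := mul_nonneg hε (hB i)
  linarith [hA i]

lemma concaveOn_iInf_add_mul (hA : ∀ i, A i₀ ≤ A i) (hB : ∀ i, 0 ≤ B i) :
    ConcaveOn ℝ (Ici 0) fun ε => ⨅ i, (A i + ε * B i) := by
  have : Nonempty ι := ⟨i₀⟩
  refine ⟨convex_Ici 0, fun x hx y hy a b ha hb hab => le_ciInf fun i => ?_⟩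
  calc a • (⨅ i, (A i + x * B i)) + b • (⨅ i, (A i + y * B i))
      ≤ a • (A i + x * B i) + b • (A i + y * B i) := by
        gcongr
        exacts [ciInf_le (bddBelow_range_add_mul hA hB hx) i,
          ciInf_le (bddBelow_range_add_mul hA hB hy) i]
    _ = A i + (a • x + b • y) * B i := by
        simp only [smul_eq_mul]
        linear_combination A i * hab

lemma exists_hasDerivWithinAt_iInf_add_mul (hA : ∀ i, A i₀ ≤ A i) (hB : ∀ i, 0 ≤ B i) :
    ∃ q ≤ B i₀, HasDerivWithinAt (fun ε => ⨅ i, (A i + ε * B i)) q (Ioi 0) 0 := by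
  have : Nonempty ι := ⟨i₀⟩
  set φ : ℝ → ℝ := fun ε => ⨅ i, (A i + ε * B i)
  have hφ0 : φ 0 = A i₀ := iInf_add_zero_mul hA
  have hanti : AntitoneOn (slope φ 0) (Ioi 0) :=
    ((concaveOn_iInf_add_mul hA hB).slope_anti self_mem_Ici).mono fun ε (hε : 0 < ε) =>
      ⟨mem_Ici.2 hε.le, hε.ne'⟩
  have hle : ∀ s ∈ slope φ 0 '' Ioi 0, s ≤ B i₀ := by
    rintro _ ⟨ε, hε : 0 < ε, rfl⟩
    rw [slope_def_field, sub_zero, div_le_iff₀ hε, hφ0]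
    linarith [ciInf_le (bddBelow_range_add_mul hA hB hε.le) i₀]
  exact ⟨_, csSup_le (nonempty_Ioi.image _) hle,
    (hasDerivWithinAt_iff_tendsto_slope' self_notMem_Ioi).2 (hanti.tendsto_nhdsGT ⟨_, hle⟩)⟩

end InfimumOfAffineFunctions

section Capacity

variable {n : ℕ} {K T : Set (E n)}

/-- The derivatives of the loops in `𝓔₂`; a loop of mean zero is determined by its derivative. -/
abbrev LoopDeriv (n : ℕ) := {dz : ℝ → E n // ∃ z, InE n 2 z dz}

lemma capacity_eq_sq_iInf (S : Set (E n)) :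
    capacity n S = ((⨅ dz : LoopDeriv n, suppLength n S dz) / 2) ^ 2 := by
  have hrange : {r : ℝ | ∃ z dz : ℝ → E n, InE n 2 z dz ∧
      r = (1 / (2 * π)) * ∫ t in (0 : ℝ)..(2 * π), suppFn n S (dz t)} =
      range fun dz : LoopDeriv n => 1 / (2 * π) * suppLength n S dz := by
    ext r
    simp only [mem_ofPred_eq, mem_range, Subtype.exists, exists_prop, suppLength]
    grind
  rw [capacity, hrange, sInf_range, ← Real.mul_iInf_of_nonneg (by positivity)]
  field_simp

lemma suppLength_nonneg {S : Set (E n)} (h0 : 0 ∈ S) (dz : ℝ → E n) : 0 ≤ suppLength n S dz :=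
  integral_nonneg (by positivity) fun _ _ => suppFn_nonneg h0 _

lemma suppLength_add_smul (hK : Bornology.IsBounded K) (h0K : 0 ∈ K) (hT : Bornology.IsBounded T)
    (h0T : 0 ∈ T) {ε : ℝ} (hε : 0 ≤ ε) {dz : ℝ → E n}
    (hdz : IntervalIntegrable dz volume 0 (2 * π)) :
    suppLength n (K + ε • T) dz = suppLength n K dz + ε * suppLength n T dz := by
  simp only [suppLength, suppFn_add_set hK ⟨0, h0K⟩ (hT.smul₀ ε) (.smul_set ⟨0, h0T⟩),
    suppFn_smul_set hε]
  rw [intervalIntegral.integral_add (intervalIntegrable_suppFn hK h0K hdz)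
    ((intervalIntegrable_suppFn hT h0T hdz).const_mul ε), intervalIntegral.integral_const_mul]

lemma capacity_add_smul (hK : Bornology.IsBounded K) (h0K : 0 ∈ K) (hT : Bornology.IsBounded T)
    (h0T : 0 ∈ T) {ε : ℝ} (hε : 0 ≤ ε) : capacity n (K + ε • T) =
      ((⨅ dz : LoopDeriv n, (suppLength n K dz + ε * suppLength n T dz)) / 2) ^ 2 := by
  have hadd (dz : LoopDeriv n) :
      suppLength n (K + ε • T) dz = suppLength n K dz + ε * suppLength n T dz :=
    suppLength_add_smul hK h0K hT h0T hε (dz.2.choose_spec.2.1 _ _)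
  rw [capacity_eq_sq_iInf, iInf_congr hadd]

theorem exists_hasDerivWithinAt_capacity (hK : Bornology.IsBounded K) (h0K : 0 ∈ K)
    (hT : Bornology.IsBounded T) (h0T : 0 ∈ T) {dz₀ : LoopDeriv n}
    (hmin : ∀ dz : LoopDeriv n, suppLength n K dz₀ ≤ suppLength n K dz) :
    ∃ q ≤ suppLength n T dz₀, HasDerivWithinAt (fun ε : ℝ => capacity n (K + ε • T))
      (suppLength n K dz₀ / 2 * q) (Ioi 0) 0 := by
  obtain ⟨q, hq, hderiv⟩ := exists_hasDerivWithinAt_iInf_add_mul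
    (A := fun dz : LoopDeriv n => suppLength n K dz) (B := fun dz => suppLength n T dz)
    hmin fun dz => suppLength_nonneg h0T dz
  have hcap (ε : ℝ) (hε : 0 ≤ ε) := capacity_add_smul hK h0K hT h0T hε
  have hsq := ((hderiv.div_const 2).fun_pow 2).congr (fun ε (hε : 0 < ε) => hcap ε hε.le)
    (hcap 0 le_rfl)
  refine ⟨q, hq, hsq.congr_deriv ?_⟩
  rw [iInf_add_zero_mul (A := fun dz : LoopDeriv n => suppLength n K dz) hmin]
  ring

lemma IsCapacityCarrier.two_mul_sqrt_action_le {γ : ℝ → E n} {T₀ : ℝ}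
    (hγ : IsCapacityCarrier n K γ T₀) (hK : Bornology.IsBounded K) (hc : Convex ℝ K)
    (h0 : K ∈ 𝓝 (0 : E n)) (hs : HasSmoothBoundary n K) (dz : LoopDeriv n) :
    2 * √(action n γ T₀) ≤ suppLength n K dz := by
  obtain ⟨z, hz⟩ := dz.2
  obtain ⟨γ', hγ', hle⟩ := exists_isClosedCharacteristic_action_le hK hc h0 hs hz
  have hlen := suppLength_nonneg (mem_of_mem_nhds h0) dz.1
  have hsqrt : √(action n γ T₀) ≤ suppLength n K dz / 2 :=
    Real.sqrt_le_iff.2 ⟨by positivity, ((hγ.2 γ' 1 hγ').trans (hle z dz hz)).trans_eq (by ring)⟩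
  linarith

end Capacity

theorem capacity_derivative_le_length_general (n : ℕ) (K T : Set (E n))
    (hK : Bornology.IsBounded K) (hKc : Convex ℝ K) (h0K : (0 : E n) ∈ interior K)
    (hKs : HasSmoothBoundary n K) (hT : Bornology.IsBounded T) (h0T : (0 : E n) ∈ T)
    (γ : ℝ → E n) (T₀ : ℝ) (hγ : IsCapacityCarrier n K γ T₀) :
    ∃ L : ℝ,
      Tendsto (fun ε : ℝ => (capacity n (K + ε • T) - capacity n K) / ε)
        (𝓝[>] (0:ℝ)) (𝓝 L) ∧
      L ≤ lengthIn n (Jmap n '' polarBody n T) γ T₀ := by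
  have h0 : K ∈ 𝓝 (0 : E n) := mem_interior_iff_mem_nhds.1 h0K
  obtain ⟨z, dz, hz, hlenK, hlenT⟩ := hγ.1.exists_loop hK hKc h0 hKs 2
  obtain ⟨q, hq, hderiv⟩ := exists_hasDerivWithinAt_capacity hK (interior_subset h0K) hT h0T
    (dz₀ := ⟨dz, z, hz⟩) fun dy => hlenK.trans_le (hγ.two_mul_sqrt_action_le hK hKc h0 hKs dy)
  have hsqrt : 0 < √(action n γ T₀) := Real.sqrt_pos.2 (hγ.1.action_pos hKc h0 hKs)
  refine ⟨suppLength n K dz / 2 * q, ?_, ?_⟩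
  · refine ((hasDerivWithinAt_iff_tendsto_slope' self_notMem_Ioi).1 hderiv).congr fun ε => ?_
    rw [slope_def_field, sub_zero, zero_smul_set ⟨0, h0T⟩, add_zero]
  · calc suppLength n K dz / 2 * q = √(action n γ T₀) * q := by rw [hlenK]; ring
      _ ≤ lengthIn n (Jmap n '' polarBody n T) γ T₀ := (le_div_iff₀' hsqrt).1 (hlenT T hT h0T ▸ hq)

/-- For every capacity carrier `γ` of `K`, the derivative
`d_T(K) = lim_{ε→0⁺} (c(K+εT) − c(K))/ε` satisfies `d_T(K) ≤ length_{JT°}(γ)`. -/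
theorem capacity_derivative_le_length (n : ℕ) (K T : Set (E n))
    (hK : IsConvexBody n K) (h0K : (0 : E n) ∈ interior K) (hKs : HasSmoothBoundary n K)
    (hT : IsConvexBody n T) (h0T : (0 : E n) ∈ interior T)
    (γ : ℝ → E n) (T₀ : ℝ) (hγ : IsCapacityCarrier n K γ T₀) :
    ∃ L : ℝ,
      Tendsto (fun ε : ℝ => (capacity n (K + ε • T) - capacity n K) / ε)
        (𝓝[>] (0:ℝ)) (𝓝 L) ∧
      L ≤ lengthIn n (Jmap n '' polarBody n T) γ T₀ :=
  capacity_derivative_le_length_general n K T hK.1.isBounded hK.2.1 h0K hKs hT.1.isBounded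
    (interior_subset h0T) γ T₀ hγ
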